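/- arXiv:2307.13480 — 3 statements merged into one kernel-verified Lean document; each statement's English description precedes it below -/
import Mathlib

section
/- Let |W⟩ = (|100⟩ + |010⟩ + |001⟩)/√3 in (C²)^⊗3 and, for 3/4 < v ≤ 1, let ρ(v) = v|W⟩⟨W| + (1−v)·1₈/8. Then ρ(v) is not a triangle network state with local channels: there exist no d ≥ 1, density matrices ρ_a, ρ_b, ρ_c on C^d ⊗ C^d and quantum channels E_A, E_B, E_C from (C^d ⊗ C^d)-matrices to 2×2 matrices such that (E_A ⊗ E_B ⊗ E_C)(ρ_b ⊗ ρ_c ⊗ ρ_a) = ρ(v), where the tensor factors are arranged in the basic triangle network ordering. -/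
open Matrix Kronecker BigOperators
open scoped ComplexOrder

noncomputable section

/-- Covariance matrix of a family of observables `M` in the state `ρ`. -/
def covMat {n ι : Type*} [Fintype n] (M : ι → Matrix n n ℂ) (ρ : Matrix n n ℂ) :
    Matrix ι ι ℂ :=
  Matrix.of fun i j => (M i * M j * ρ).trace - (M i * ρ).trace * (M j * ρ).trace

/-- A density matrix: positive semidefinite with unit trace. -/
def IsDensity {n : Type*} [Fintype n] (ρ : Matrix n n ℂ) : Prop :=
  ρ.PosSemidef ∧ ρ.trace = 1

/-- Partial trace over the first tensor factor. -/
def ptrace₁ {m n : Type*} [Fintype m] (M : Matrix (m × n) (m × n) ℂ) : Matrix n n ℂ :=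
  Matrix.of fun i j => ∑ k, M (k, i) (k, j)

/-- Partial trace over the second tensor factor. -/
def ptrace₂ {m n : Type*} [Fintype n] (M : Matrix (m × n) (m × n) ℂ) : Matrix m m ℂ :=
  Matrix.of fun i j => ∑ k, M (i, k) (j, k)

/-- Index of a two-qudit space. -/
abbrev D2 (d : ℕ) := Fin d × Fin d

/-- Index of the six-factor triangle-network space, ordered C₂, A₁, A₂, B₁, B₂, C₁. -/
abbrev TriIdx (d : ℕ) := D2 d × (D2 d × D2 d)

/-- The basic triangle network state `ρ_b ⊗ ρ_c ⊗ ρ_a`. -/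
def btnState {d : ℕ} (ρa ρb ρc : Matrix (D2 d) (D2 d) ℂ) :
    Matrix (TriIdx d) (TriIdx d) ℂ :=
  ρb ⊗ₖ (ρc ⊗ₖ ρa)

/-- Embed an observable of Alice (acting on A₁A₂) into the global space. -/
def embedA {d : ℕ} (M : Matrix (D2 d) (D2 d) ℂ) : Matrix (TriIdx d) (TriIdx d) ℂ :=
  Matrix.of fun p q =>
    if p.1.1 = q.1.1 ∧ p.2.1.2 = q.2.1.2 ∧ p.2.2 = q.2.2
    then M (p.1.2, p.2.1.1) (q.1.2, q.2.1.1) else 0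

/-- Embed an observable of Bob (acting on B₁B₂) into the global space. -/
def embedB {d : ℕ} (M : Matrix (D2 d) (D2 d) ℂ) : Matrix (TriIdx d) (TriIdx d) ℂ :=
  Matrix.of fun p q =>
    if p.1 = q.1 ∧ p.2.1.1 = q.2.1.1 ∧ p.2.2.2 = q.2.2.2
    then M (p.2.1.2, p.2.2.1) (q.2.1.2, q.2.2.1) else 0

/-- Embed an observable of Charlie (acting on C₁C₂) into the global space. -/
def embedC {d : ℕ} (M : Matrix (D2 d) (D2 d) ℂ) : Matrix (TriIdx d) (TriIdx d) ℂ :=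
  Matrix.of fun p q =>
    if p.1.2 = q.1.2 ∧ p.2.1 = q.2.1 ∧ p.2.2.1 = q.2.2.1
    then M (p.2.2.2, p.1.1) (q.2.2.2, q.1.1) else 0

section marginals
variable {d : ℕ} (ρa ρb ρc : Matrix (D2 d) (D2 d) ℂ)

/-- Marginal of ρ_BTN on A₁ (second factor of ρ_b = ρ^{C₂A₁}). -/
def margA1 : Matrix (Fin d) (Fin d) ℂ := ptrace₁ ρb
/-- Marginal on C₂. -/
def margC2 : Matrix (Fin d) (Fin d) ℂ := ptrace₂ ρb
/-- Marginal on A₂ (first factor of ρ_c = ρ^{A₂B₁}). -/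
def margA2 : Matrix (Fin d) (Fin d) ℂ := ptrace₂ ρc
/-- Marginal on B₁. -/
def margB1 : Matrix (Fin d) (Fin d) ℂ := ptrace₁ ρc
/-- Marginal on B₂ (first factor of ρ_a = ρ^{B₂C₁}). -/
def margB2 : Matrix (Fin d) (Fin d) ℂ := ptrace₂ ρa
/-- Marginal on C₁. -/
def margC1 : Matrix (Fin d) (Fin d) ℂ := ptrace₁ ρa

/-- Reduced observable A^(2) = tr_{A₁}(A (ρ^{A₁} ⊗ 1)). -/
def redA2 (M : Matrix (D2 d) (D2 d) ℂ) : Matrix (Fin d) (Fin d) ℂ :=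
  ptrace₁ (M * (margA1 ρb ⊗ₖ (1 : Matrix (Fin d) (Fin d) ℂ)))
/-- Reduced observable A^(1) = tr_{A₂}(A (1 ⊗ ρ^{A₂})). -/
def redA1 (M : Matrix (D2 d) (D2 d) ℂ) : Matrix (Fin d) (Fin d) ℂ :=
  ptrace₂ (M * ((1 : Matrix (Fin d) (Fin d) ℂ) ⊗ₖ margA2 ρc))
/-- Reduced observable B^(1) = tr_{B₂}(B (1 ⊗ ρ^{B₂})). -/
def redB1 (M : Matrix (D2 d) (D2 d) ℂ) : Matrix (Fin d) (Fin d) ℂ :=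
  ptrace₂ (M * ((1 : Matrix (Fin d) (Fin d) ℂ) ⊗ₖ margB2 ρa))
/-- Reduced observable B^(2) = tr_{B₁}(B (ρ^{B₁} ⊗ 1)). -/
def redB2 (M : Matrix (D2 d) (D2 d) ℂ) : Matrix (Fin d) (Fin d) ℂ :=
  ptrace₁ (M * (margB1 ρc ⊗ₖ (1 : Matrix (Fin d) (Fin d) ℂ)))
/-- Reduced observable C^(1) = tr_{C₂}(C (1 ⊗ ρ^{C₂})); here C acts on C₁C₂. -/
def redC1 (M : Matrix (D2 d) (D2 d) ℂ) : Matrix (Fin d) (Fin d) ℂ :=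
  ptrace₂ (M * ((1 : Matrix (Fin d) (Fin d) ℂ) ⊗ₖ margC2 ρb))
/-- Reduced observable C^(2) = tr_{C₁}(C (ρ^{C₁} ⊗ 1)). -/
def redC2 (M : Matrix (D2 d) (D2 d) ℂ) : Matrix (Fin d) (Fin d) ℂ :=
  ptrace₁ (M * (margC1 ρa ⊗ₖ (1 : Matrix (Fin d) (Fin d) ℂ)))

end marginals


/-- The global Kraus operator `K_A ⊗ K_B ⊗ K_C`, mapping the six-factor
triangle-network space (ordered C₂, A₁, A₂, B₁, B₂, C₁) to the output space
of the three parties. -/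
def globalKraus {d nA nB nC : ℕ}
    (KA : Matrix (Fin nA) (D2 d) ℂ) (KB : Matrix (Fin nB) (D2 d) ℂ)
    (KC : Matrix (Fin nC) (D2 d) ℂ) :
    Matrix (Fin nA × Fin nB × Fin nC) (TriIdx d) ℂ :=
  Matrix.of fun o i =>
    KA o.1 (i.1.2, i.2.1.1) * KB o.2.1 (i.2.1.2, i.2.2.1) * KC o.2.2 (i.2.2.2, i.1.1)

/-- The triangle network state with local channels,
`(E_A ⊗ E_B ⊗ E_C)(ρ_BTN)`, with the channels given by Kraus operators. -/
def ctnState {d nA nB nC LA LB LC : ℕ}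
    (ρa ρb ρc : Matrix (D2 d) (D2 d) ℂ)
    (KA : Fin LA → Matrix (Fin nA) (D2 d) ℂ)
    (KB : Fin LB → Matrix (Fin nB) (D2 d) ℂ)
    (KC : Fin LC → Matrix (Fin nC) (D2 d) ℂ) :
    Matrix (Fin nA × Fin nB × Fin nC) (Fin nA × Fin nB × Fin nC) ℂ :=
  ∑ l, ∑ m, ∑ n,
    globalKraus (KA l) (KB m) (KC n) * btnState ρa ρb ρc *
      (globalKraus (KA l) (KB m) (KC n))ᴴ

/-- Embed an observable of Alice into the tripartite output space. -/
def outA {nA nB nC : ℕ} (M : Matrix (Fin nA) (Fin nA) ℂ) :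
    Matrix (Fin nA × Fin nB × Fin nC) (Fin nA × Fin nB × Fin nC) ℂ :=
  M ⊗ₖ (1 : Matrix (Fin nB × Fin nC) (Fin nB × Fin nC) ℂ)

/-- Embed an observable of Bob into the tripartite output space. -/
def outB {nA nB nC : ℕ} (M : Matrix (Fin nB) (Fin nB) ℂ) :
    Matrix (Fin nA × Fin nB × Fin nC) (Fin nA × Fin nB × Fin nC) ℂ :=
  Matrix.of fun p q => if p.1 = q.1 ∧ p.2.2 = q.2.2 then M p.2.1 q.2.1 else 0

/-- Embed an observable of Charlie into the tripartite output space. -/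
def outC {nA nB nC : ℕ} (M : Matrix (Fin nC) (Fin nC) ℂ) :
    Matrix (Fin nA × Fin nB × Fin nC) (Fin nA × Fin nB × Fin nC) ℂ :=
  (1 : Matrix (Fin nA) (Fin nA) ℂ) ⊗ₖ ((1 : Matrix (Fin nB) (Fin nB) ℂ) ⊗ₖ M)

/-- The three-qubit W state vector `(|100⟩ + |010⟩ + |001⟩)/√3`. -/
def wVec : Fin 2 × Fin 2 × Fin 2 → ℂ := fun i =>
  if i = (1, 0, 0) ∨ i = (0, 1, 0) ∨ i = (0, 0, 1) then ((Real.sqrt 3)⁻¹ : ℝ) else 0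

/-- The W state mixed with white noise, `v |W⟩⟨W| + (1−v) 1/8`. -/
def wNoisy (v : ℝ) : Matrix (Fin 2 × Fin 2 × Fin 2) (Fin 2 × Fin 2 × Fin 2) ℂ :=
  (v : ℂ) • vecMulVec wVec (star wVec) +
    ((1 - v : ℝ) : ℂ) • ((8 : ℂ)⁻¹ • (1 : Matrix (Fin 2 × Fin 2 × Fin 2) (Fin 2 × Fin 2 × Fin 2) ℂ))

/-! ### Partial traces -/

lemma posSemidef_ptrace1 {m n : Type*} [Fintype m] [Fintype n] {M : Matrix (m × n) (m × n) ℂ}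
    (h : M.PosSemidef) : (ptrace₁ M).PosSemidef := by
  have : ptrace₁ M = ∑ k, M.submatrix (fun i => (k, i)) (fun i => (k, i)) := by
    ext i j; simp [ptrace₁, Matrix.sum_apply]
  rw [this]
  exact Matrix.posSemidef_sum _ (fun k _ => h.submatrix _)

lemma posSemidef_ptrace2 {m n : Type*} [Fintype m] [Fintype n] {M : Matrix (m × n) (m × n) ℂ}
    (h : M.PosSemidef) : (ptrace₂ M).PosSemidef := by
  have : ptrace₂ M = ∑ k, M.submatrix (fun i => (i, k)) (fun i => (i, k)) := by
    ext i j; simp [ptrace₂, Matrix.sum_apply]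
  rw [this]
  exact Matrix.posSemidef_sum _ (fun k _ => h.submatrix _)

lemma trace_ptrace1 {m n : Type*} [Fintype m] [Fintype n] (M : Matrix (m × n) (m × n) ℂ) :
    (ptrace₁ M).trace = M.trace := by
  simp only [Matrix.trace, ptrace₁, Matrix.diag, Matrix.of_apply, Fintype.sum_prod_type]
  rw [Finset.sum_comm]

lemma trace_ptrace2 {m n : Type*} [Fintype m] [Fintype n] (M : Matrix (m × n) (m × n) ℂ) :
    (ptrace₂ M).trace = M.trace := by
  simp only [Matrix.trace, ptrace₂, Matrix.diag, Matrix.of_apply, Fintype.sum_prod_type]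

lemma trace_mul_kron_one {d : ℕ} (N : Matrix (D2 d) (D2 d) ℂ) (P : Matrix (Fin d) (Fin d) ℂ) :
    (N * (P ⊗ₖ (1 : Matrix (Fin d) (Fin d) ℂ))).trace = (ptrace₂ N * P).trace := by
  simp only [Matrix.trace, ptrace₂, Matrix.diag, Matrix.of_apply, Fintype.sum_prod_type,
    Matrix.mul_apply, Matrix.kroneckerMap_apply, Matrix.one_apply, mul_ite, mul_one, mul_zero,
    Finset.sum_ite_eq', Finset.mem_univ, if_true, Finset.sum_mul]
  refine Finset.sum_congr rfl fun i _ => ?_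
  rw [Finset.sum_comm]

lemma trace_mul_one_kron {d : ℕ} (N : Matrix (D2 d) (D2 d) ℂ) (P : Matrix (Fin d) (Fin d) ℂ) :
    (N * ((1 : Matrix (Fin d) (Fin d) ℂ) ⊗ₖ P)).trace = (ptrace₁ N * P).trace := by
  simp only [Matrix.trace, ptrace₁, Matrix.diag, Matrix.of_apply, Fintype.sum_prod_type,
    Matrix.mul_apply, Matrix.kroneckerMap_apply, Matrix.one_apply, ite_mul, one_mul, zero_mul,
    mul_ite, mul_zero, Finset.sum_mul]
  rw [Finset.sum_comm]
  refine Finset.sum_congr rfl fun i _ => ?_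
  conv_rhs => rw [Finset.sum_comm]
  refine Finset.sum_congr rfl fun j _ => ?_
  rw [Finset.sum_comm]
  simp

/-- reduction to the first factor -/
def rFst {d : ℕ} (τ : Matrix (Fin d) (Fin d) ℂ) (M : Matrix (D2 d) (D2 d) ℂ) :
    Matrix (Fin d) (Fin d) ℂ := ptrace₂ (M * ((1 : Matrix (Fin d) (Fin d) ℂ) ⊗ₖ τ))

/-- reduction to the second factor -/
def rSnd {d : ℕ} (σ : Matrix (Fin d) (Fin d) ℂ) (M : Matrix (D2 d) (D2 d) ℂ) :
    Matrix (Fin d) (Fin d) ℂ := ptrace₁ (M * (σ ⊗ₖ (1 : Matrix (Fin d) (Fin d) ℂ)))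

lemma rFst_apply {d : ℕ} (τ : Matrix (Fin d) (Fin d) ℂ) (M : Matrix (D2 d) (D2 d) ℂ)
    (i j : Fin d) : rFst τ M i j = ∑ k, ∑ k', M (i, k) (j, k') * τ k' k := by
  simp only [rFst, ptrace₂, Matrix.of_apply, Fintype.sum_prod_type,
    Matrix.mul_apply, Matrix.kroneckerMap_apply, Matrix.one_apply, ite_mul, one_mul, zero_mul,
    mul_ite, mul_zero]
  refine Finset.sum_congr rfl fun k _ => ?_
  rw [Finset.sum_comm]
  simp

lemma rSnd_apply {d : ℕ} (σ : Matrix (Fin d) (Fin d) ℂ) (M : Matrix (D2 d) (D2 d) ℂ)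
    (i j : Fin d) : rSnd σ M i j = ∑ k, ∑ k', M (k, i) (k', j) * σ k' k := by
  simp only [rSnd, ptrace₁, Matrix.of_apply, Fintype.sum_prod_type,
    Matrix.mul_apply, Matrix.kroneckerMap_apply, Matrix.one_apply, mul_one, mul_zero,
    mul_ite]
  simp

lemma rFst_herm {d : ℕ} {τ : Matrix (Fin d) (Fin d) ℂ} {M : Matrix (D2 d) (D2 d) ℂ}
    (hτ : τ.IsHermitian) (hM : M.IsHermitian) : (rFst τ M).IsHermitian := by
  ext i j
  rw [Matrix.conjTranspose_apply, rFst_apply, rFst_apply, star_sum, Finset.sum_comm]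
  simp only [star_sum, star_mul', hM.apply, hτ.apply]

lemma rSnd_herm {d : ℕ} {σ : Matrix (Fin d) (Fin d) ℂ} {M : Matrix (D2 d) (D2 d) ℂ}
    (hσ : σ.IsHermitian) (hM : M.IsHermitian) : (rSnd σ M).IsHermitian := by
  ext i j
  rw [Matrix.conjTranspose_apply, rSnd_apply, rSnd_apply, star_sum, Finset.sum_comm]
  simp only [star_sum, star_mul', hM.apply, hσ.apply]

lemma trace_mul_kron_fst {d : ℕ} (M : Matrix (D2 d) (D2 d) ℂ) (P Q : Matrix (Fin d) (Fin d) ℂ) :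
    (M * (P ⊗ₖ Q)).trace = (rFst Q M * P).trace := by
  rw [rFst, ← trace_mul_kron_one, Matrix.mul_assoc, ← Matrix.mul_kronecker_mul]
  simp

lemma trace_mul_kron_snd {d : ℕ} (M : Matrix (D2 d) (D2 d) ℂ) (P Q : Matrix (Fin d) (Fin d) ℂ) :
    (M * (P ⊗ₖ Q)).trace = (rSnd P M * Q).trace := by
  rw [rSnd, ← trace_mul_one_kron, Matrix.mul_assoc, ← Matrix.mul_kronecker_mul]
  simp

lemma trace_sq_nonneg {n : Type*} [Fintype n] {Y ρ : Matrix n n ℂ}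
    (hY : Y.IsHermitian) (hρ : ρ.PosSemidef) : 0 ≤ (Y * Y * ρ).trace := by
  have h := (hρ.mul_mul_conjTranspose_same Y).trace_nonneg
  rw [hY.eq, Matrix.trace_mul_comm, ← Matrix.mul_assoc] at h
  exact h

lemma party {d : ℕ} {σ τ : Matrix (Fin d) (Fin d) ℂ} {M : Matrix (D2 d) (D2 d) ℂ}
    (hσ : σ.PosSemidef) (hτ : τ.PosSemidef) (hσ1 : σ.trace = 1) (hτ1 : τ.trace = 1)
    (hM : M.IsHermitian)
    (h0 : (M * (σ ⊗ₖ τ)).trace = 0) :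
    (rFst τ M * rFst τ M * σ).trace + (rSnd σ M * rSnd σ M * τ).trace
      ≤ (M * M * (σ ⊗ₖ τ)).trace := by
  set P := rFst τ M with hP
  set Q := rSnd σ M with hQ
  have hPh : P.IsHermitian := rFst_herm hτ.1 hM
  have hQh : Q.IsHermitian := rSnd_herm hσ.1 hM
  have hP1 : (P ⊗ₖ (1 : Matrix (Fin d) (Fin d) ℂ)).IsHermitian := by
    rw [Matrix.IsHermitian, Matrix.conjTranspose_kronecker, hPh.eq, Matrix.conjTranspose_one]
  have hQ1 : ((1 : Matrix (Fin d) (Fin d) ℂ) ⊗ₖ Q).IsHermitian := by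
    rw [Matrix.IsHermitian, Matrix.conjTranspose_kronecker, hQh.eq, Matrix.conjTranspose_one]
  have h := trace_sq_nonneg ((hM.sub hP1).sub hQ1) (hσ.kronecker hτ)
  have e1 : (M * (P ⊗ₖ (1 : Matrix (Fin d) (Fin d) ℂ)) * (σ ⊗ₖ τ)).trace = (P * P * σ).trace := by
    rw [Matrix.mul_assoc, ← Matrix.mul_kronecker_mul, Matrix.one_mul, trace_mul_kron_fst,
      ← hP, Matrix.mul_assoc]
  have e2 : ((P ⊗ₖ (1 : Matrix (Fin d) (Fin d) ℂ)) * M * (σ ⊗ₖ τ)).trace = (P * P * σ).trace := by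
    rw [Matrix.mul_assoc, Matrix.trace_mul_comm, Matrix.mul_assoc, ← Matrix.mul_kronecker_mul,
      Matrix.mul_one, trace_mul_kron_fst, ← hP, ← Matrix.mul_assoc, Matrix.trace_mul_comm,
      ← Matrix.mul_assoc]
  have e3 : (M * ((1 : Matrix (Fin d) (Fin d) ℂ) ⊗ₖ Q) * (σ ⊗ₖ τ)).trace = (Q * Q * τ).trace := by
    rw [Matrix.mul_assoc, ← Matrix.mul_kronecker_mul, Matrix.one_mul, trace_mul_kron_snd,
      ← hQ, Matrix.mul_assoc]
  have e4 : (((1 : Matrix (Fin d) (Fin d) ℂ) ⊗ₖ Q) * M * (σ ⊗ₖ τ)).trace = (Q * Q * τ).trace := by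
    rw [Matrix.mul_assoc, Matrix.trace_mul_comm, Matrix.mul_assoc, ← Matrix.mul_kronecker_mul,
      Matrix.mul_one, trace_mul_kron_snd, ← hQ, ← Matrix.mul_assoc, Matrix.trace_mul_comm,
      ← Matrix.mul_assoc]
  have hPσ : (P * σ).trace = 0 := by rw [hP, ← trace_mul_kron_fst, h0]
  have e5 : ((P ⊗ₖ (1 : Matrix (Fin d) (Fin d) ℂ)) * ((1 : Matrix (Fin d) (Fin d) ℂ) ⊗ₖ Q)
      * (σ ⊗ₖ τ)).trace = 0 := by
    rw [← Matrix.mul_kronecker_mul, ← Matrix.mul_kronecker_mul, Matrix.trace_kronecker,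
      Matrix.mul_one, hPσ, zero_mul]
  have e6 : (((1 : Matrix (Fin d) (Fin d) ℂ) ⊗ₖ Q) * (P ⊗ₖ (1 : Matrix (Fin d) (Fin d) ℂ))
      * (σ ⊗ₖ τ)).trace = 0 := by
    rw [← Matrix.mul_kronecker_mul, ← Matrix.mul_kronecker_mul, Matrix.trace_kronecker,
      Matrix.one_mul, hPσ, zero_mul]
  have e7 : ((P ⊗ₖ (1 : Matrix (Fin d) (Fin d) ℂ)) * (P ⊗ₖ (1 : Matrix (Fin d) (Fin d) ℂ))
      * (σ ⊗ₖ τ)).trace = (P * P * σ).trace * τ.trace := by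
    rw [← Matrix.mul_kronecker_mul, ← Matrix.mul_kronecker_mul, Matrix.trace_kronecker,
      Matrix.one_mul, Matrix.one_mul]
  have e8 : (((1 : Matrix (Fin d) (Fin d) ℂ) ⊗ₖ Q) * ((1 : Matrix (Fin d) (Fin d) ℂ) ⊗ₖ Q)
      * (σ ⊗ₖ τ)).trace = σ.trace * (Q * Q * τ).trace := by
    rw [← Matrix.mul_kronecker_mul, ← Matrix.mul_kronecker_mul, Matrix.trace_kronecker,
      Matrix.one_mul, Matrix.one_mul]
  simp only [Matrix.sub_mul, Matrix.mul_sub, Matrix.trace_sub, e1, e2, e3, e4, e5, e6, e7, e8,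
    hσ1, hτ1] at h
  rw [← sub_nonneg]
  convert h using 1
  ring

lemma pairIneq {d : ℕ} {ρ : Matrix (D2 d) (D2 d) ℂ} {P Q : Matrix (Fin d) (Fin d) ℂ}
    (hρ : ρ.PosSemidef) (hPh : P.IsHermitian) (hQh : Q.IsHermitian) :
    2 * ((P ⊗ₖ Q) * ρ).trace ≤ (P * P * ptrace₂ ρ).trace + (Q * Q * ptrace₁ ρ).trace := by
  have hP1 : (P ⊗ₖ (1 : Matrix (Fin d) (Fin d) ℂ)).IsHermitian := by
    rw [Matrix.IsHermitian, Matrix.conjTranspose_kronecker, hPh.eq, Matrix.conjTranspose_one]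
  have hQ1 : ((1 : Matrix (Fin d) (Fin d) ℂ) ⊗ₖ Q).IsHermitian := by
    rw [Matrix.IsHermitian, Matrix.conjTranspose_kronecker, hQh.eq, Matrix.conjTranspose_one]
  have h := trace_sq_nonneg (hP1.sub hQ1) hρ
  simp only [Matrix.sub_mul, Matrix.mul_sub, Matrix.trace_sub, ← Matrix.mul_kronecker_mul,
    Matrix.mul_one, Matrix.one_mul] at h
  rw [Matrix.trace_mul_comm ((P * P) ⊗ₖ _), Matrix.trace_mul_comm (_ ⊗ₖ (Q * Q)),
    trace_mul_kron_one, trace_mul_one_kron, Matrix.trace_mul_comm _ (P * P),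
    Matrix.trace_mul_comm _ (Q * Q)] at h
  rw [← sub_nonneg]
  convert h using 1
  ring

/-- Kadison inequality for the dual channel. -/
lemma kadison {n : Type*} [Fintype n] [DecidableEq n] {L : ℕ} (K : Fin L → Matrix (Fin 2) n ℂ)
    (hK : ∑ l, (K l)ᴴ * K l = 1) (X : Matrix (Fin 2) (Fin 2) ℂ) (hX : X.IsHermitian)
    (hXX : X * X = 1) {ρ : Matrix n n ℂ} (hρ : ρ.PosSemidef) :
    ((∑ l, (K l)ᴴ * X * K l) * (∑ l, (K l)ᴴ * X * K l) * ρ).trace ≤ ρ.trace := by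
  set A := ∑ l, (K l)ᴴ * X * K l with hA
  have hAh : A.IsHermitian := by
    rw [Matrix.IsHermitian, hA, Matrix.conjTranspose_sum]
    simp [Matrix.conjTranspose_mul, hX.eq, Matrix.mul_assoc]
  have key : ∑ l, (X * K l - K l * A)ᴴ * (X * K l - K l * A) = 1 - A * A := by
    have : ∀ l, (X * K l - K l * A)ᴴ * (X * K l - K l * A)
        = (K l)ᴴ * K l - ((K l)ᴴ * X * K l) * A - A * ((K l)ᴴ * X * K l)
          + A * ((K l)ᴴ * K l) * A := by
      intro l
      have h1 : (K l)ᴴ * X * (X * K l) = (K l)ᴴ * K l := by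
        rw [Matrix.mul_assoc, ← Matrix.mul_assoc X, hXX, Matrix.one_mul]
      rw [Matrix.conjTranspose_sub, Matrix.conjTranspose_mul, Matrix.conjTranspose_mul, hX.eq,
        hAh.eq, Matrix.sub_mul, Matrix.mul_sub, Matrix.mul_sub, h1]
      simp only [Matrix.mul_assoc]
      abel
    simp only [this, Finset.sum_add_distrib, Finset.sum_sub_distrib, ← Finset.sum_mul,
      ← Finset.mul_sum, hK, ← Matrix.sum_mul, ← Matrix.mul_sum, ← hA]
    simp
  have hpos : 0 ≤ ((1 - A * A) * ρ).trace := by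
    rw [← key, Matrix.sum_mul, Matrix.trace_sum]
    refine Finset.sum_nonneg fun l _ => ?_
    have h := (hρ.mul_mul_conjTranspose_same (X * K l - K l * A)).trace_nonneg
    rw [Matrix.trace_mul_comm, ← Matrix.mul_assoc] at h
    exact h
  rw [Matrix.sub_mul, Matrix.one_mul, Matrix.trace_sub, sub_nonneg] at hpos
  exact hpos

/-! ### Expectation values -/

/-- reorder to A, B, C -/
def eTri {d : ℕ} (i : TriIdx d) : D2 d × D2 d × D2 d :=
  ((i.1.2, i.2.1.1), (i.2.1.2, i.2.2.1), (i.2.2.2, i.1.1))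

/-- expectation value of product observable in the triangle state -/
def TT {d : ℕ} (ρa ρb ρc MA MB MC : Matrix (D2 d) (D2 d) ℂ) : ℂ :=
  ((MA ⊗ₖ (MB ⊗ₖ MC)).submatrix eTri eTri * btnState ρa ρb ρc).trace

lemma TT_cyc {d : ℕ} (ρa ρb ρc MA MB MC : Matrix (D2 d) (D2 d) ℂ) :
    TT ρa ρb ρc MA MB MC = TT ρb ρc ρa MB MC MA := by
  let e : TriIdx d ≃ TriIdx d :=
    ⟨fun i => (i.2.1, i.2.2, i.1), fun i => (i.2.2, i.1, i.2.1), fun _ => rfl, fun _ => rfl⟩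
  simp only [TT, Matrix.trace, Matrix.diag, Matrix.mul_apply]
  refine Fintype.sum_equiv e _ _ fun p => ?_
  refine Fintype.sum_equiv e _ _ fun q => ?_
  simp only [e, eTri, btnState, Equiv.coe_fn_mk, Matrix.submatrix_apply,
    Matrix.kroneckerMap_apply]
  ring

lemma globalKraus_eq {d : ℕ} (KA KB KC : Matrix (Fin 2) (D2 d) ℂ) :
    globalKraus KA KB KC = (KA ⊗ₖ (KB ⊗ₖ KC)).submatrix id eTri := by
  ext o i
  simp [globalKraus, eTri, mul_assoc]

lemma trace_ctn {d LA LB LC : ℕ} (ρa ρb ρc : Matrix (D2 d) (D2 d) ℂ)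
    (KA : Fin LA → Matrix (Fin 2) (D2 d) ℂ) (KB : Fin LB → Matrix (Fin 2) (D2 d) ℂ)
    (KC : Fin LC → Matrix (Fin 2) (D2 d) ℂ) (P Q R : Matrix (Fin 2) (Fin 2) ℂ) :
    ((P ⊗ₖ (Q ⊗ₖ R)) * ctnState ρa ρb ρc KA KB KC).trace =
      TT ρa ρb ρc (∑ l, (KA l)ᴴ * P * KA l) (∑ l, (KB l)ᴴ * Q * KB l)
        (∑ l, (KC l)ᴴ * R * KC l) := by
  have h1 : ∀ l m n, ((P ⊗ₖ (Q ⊗ₖ R)) * (globalKraus (KA l) (KB m) (KC n) * btnState ρa ρb ρc *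
      (globalKraus (KA l) (KB m) (KC n))ᴴ)).trace =
      TT ρa ρb ρc ((KA l)ᴴ * P * KA l) ((KB m)ᴴ * Q * KB m) ((KC n)ᴴ * R * KC n) := by
    intro l m n
    rw [← Matrix.mul_assoc, Matrix.trace_mul_comm, ← Matrix.mul_assoc, ← Matrix.mul_assoc, TT]
    congr 2
    rw [globalKraus_eq, Matrix.conjTranspose_submatrix, Matrix.mul_kronecker_mul,
      Matrix.mul_kronecker_mul, Matrix.mul_kronecker_mul, Matrix.mul_kronecker_mul,
      Matrix.conjTranspose_kronecker, Matrix.conjTranspose_kronecker]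
    ext p q
    simp [Matrix.mul_apply]
  simp only [ctnState, Matrix.mul_sum, Matrix.trace_sum, h1]
  simp only [TT]
  simp only [← Matrix.trace_sum, ← Matrix.sum_mul]
  congr 2
  ext p q
  simp only [Matrix.sum_apply, Matrix.submatrix_apply, Matrix.kroneckerMap_apply, 
    Finset.sum_mul, Finset.mul_sum]
  conv_rhs => rw [Finset.sum_comm]
  conv_rhs => enter [2, x]; rw [Finset.sum_comm]
  rw [Finset.sum_comm]

lemma sum_six {X Y Z : Type*} [Fintype X] [Fintype Y] [Fintype Z]
    (f : X → Y → Z → X → Y → Z → ℂ) :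
    ∑ p : X × Y × Z, ∑ q : X × Y × Z, f p.1 p.2.1 p.2.2 q.1 q.2.1 q.2.2 =
      ∑ y, ∑ y', ∑ x, ∑ x', ∑ z, ∑ z', f x y z x' y' z' := by
  let e : (X × Y × Z) × (X × Y × Z) ≃ Y × Y × X × X × Z × Z :=
    ⟨fun t => (t.1.2.1, t.2.2.1, t.1.1, t.2.1, t.1.2.2, t.2.2.2),
      fun t => ((t.2.2.1, t.1, t.2.2.2.2.1), (t.2.2.2.1, t.2.1, t.2.2.2.2.2)),
      fun _ => rfl, fun _ => rfl⟩
  calc _ = ∑ t : (X × Y × Z) × (X × Y × Z),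
        f t.1.1 t.1.2.1 t.1.2.2 t.2.1 t.2.2.1 t.2.2.2 := (Fintype.sum_prod_type _).symm
    _ = ∑ t : Y × Y × X × X × Z × Z,
        f t.2.2.1 t.1 t.2.2.2.2.1 t.2.2.2.1 t.2.1 t.2.2.2.2.2 :=
      Fintype.sum_equiv e _ _ fun _ => rfl
    _ = _ := by simp only [Fintype.sum_prod_type]

lemma sum_diag {d : ℕ} (g : Fin d → Fin d → Fin d → ℂ) :
    ∑ k, ∑ k', ∑ c, g k k' c = ∑ c, ∑ k, ∑ c', ∑ k', if c = c' then g k k' c else 0 := by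
  conv_rhs => rw [Finset.sum_comm]
  refine Finset.sum_congr rfl fun k _ => ?_
  rw [Finset.sum_comm]
  refine Finset.sum_congr rfl fun c _ => ?_
  rw [Finset.sum_comm]
  simp

lemma sum_diag' {d : ℕ} (g : Fin d → Fin d → Fin d → ℂ) :
    ∑ k, ∑ k', ∑ c, g k k' c = ∑ k, ∑ c, ∑ k', ∑ c', if c = c' then g k k' c else 0 := by
  refine Finset.sum_congr rfl fun k _ => ?_
  rw [Finset.sum_comm]
  simp

lemma TT_AB {d : ℕ} (ρa ρb ρc MA MB : Matrix (D2 d) (D2 d) ℂ) :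
    TT ρa ρb ρc MA MB 1 =
      ((rSnd (ptrace₁ ρb) MA ⊗ₖ rFst (ptrace₂ ρa) MB) * ρc).trace := by
  have h1 : ∀ i j, rSnd (ptrace₁ ρb) MA i j =
      ∑ x : D2 d, ∑ x' : D2 d, if x.1 = x'.1 then MA (x.2, i) (x'.2, j) * ρb x' x else 0 := by
    intro i j
    rw [rSnd_apply]
    simp only [ptrace₁, Matrix.of_apply, Fintype.sum_prod_type, Finset.mul_sum]
    rw [sum_diag]
    refine Finset.sum_congr rfl fun c _ => Finset.sum_congr rfl fun k _ =>
      Finset.sum_congr rfl fun c' _ => Finset.sum_congr rfl fun k' _ => ?_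
    split_ifs with h
    · rw [h]
    · rfl
  have h2 : ∀ i j, rFst (ptrace₂ ρa) MB i j =
      ∑ x : D2 d, ∑ x' : D2 d, if x.2 = x'.2 then MB (i, x.1) (j, x'.1) * ρa x' x else 0 := by
    intro i j
    rw [rFst_apply]
    simp only [ptrace₂, Matrix.of_apply, Fintype.sum_prod_type, Finset.mul_sum]
    rw [sum_diag']
    refine Finset.sum_congr rfl fun c _ => Finset.sum_congr rfl fun k _ =>
      Finset.sum_congr rfl fun c' _ => Finset.sum_congr rfl fun k' _ => ?_
    split_ifs with h
    · rw [h]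
    · rfl
  simp only [TT, Matrix.trace, Matrix.diag, Matrix.mul_apply, Matrix.kroneckerMap_apply, h1, h2,
    Matrix.submatrix_apply, eTri, btnState]
  rw [sum_six (fun (x y z x' y' z' : D2 d) => MA (x.2, y.1) (x'.2, y'.1) *
    (MB (y.2, z.1) (y'.2, z'.1) * (1 : Matrix (D2 d) (D2 d) ℂ) (z.2, x.1) (z'.2, x'.1)) *
    (ρb x' x * (ρc y' y * ρa z' z)))]
  refine Finset.sum_congr rfl fun y _ => Finset.sum_congr rfl fun y' _ => ?_
  rw [Finset.sum_mul, Finset.sum_mul]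
  refine Finset.sum_congr rfl fun x _ => ?_
  rw [Finset.sum_mul, Finset.sum_mul]
  refine Finset.sum_congr rfl fun x' _ => ?_
  rw [Finset.mul_sum, Finset.sum_mul]
  refine Finset.sum_congr rfl fun z _ => ?_
  rw [Finset.mul_sum, Finset.sum_mul]
  refine Finset.sum_congr rfl fun z' _ => ?_
  by_cases hx : x.1 = x'.1 <;> by_cases hz : z.2 = z'.2 <;>
    simp [Matrix.one_apply, hx, hz]
  ring

lemma rFst_one {d : ℕ} (τ : Matrix (Fin d) (Fin d) ℂ) (h : τ.trace = 1) :
    rFst τ (1 : Matrix (D2 d) (D2 d) ℂ) = 1 := by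
  ext i j
  rw [rFst_apply]
  by_cases hij : i = j
  · simp only [Matrix.one_apply, hij, Prod.mk.injEq, true_and, ite_mul, one_mul, zero_mul,
      Finset.sum_ite_eq, Finset.mem_univ, if_true]
    exact h
  · simp [Matrix.one_apply, hij]

lemma TT_A {d : ℕ} (ρa ρb ρc MA : Matrix (D2 d) (D2 d) ℂ) (ha : ρa.trace = 1) :
    TT ρa ρb ρc MA 1 1 = (MA * (ptrace₁ ρb ⊗ₖ ptrace₂ ρc)).trace := by
  rw [TT_AB, rFst_one _ (by rw [trace_ptrace2, ha]), Matrix.trace_mul_comm, trace_mul_kron_one,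
    trace_mul_kron_snd, Matrix.trace_mul_comm]

/-- Pauli X -/
def pX : Matrix (Fin 2) (Fin 2) ℂ := !![0, 1; 1, 0]

lemma pX_herm : pX.IsHermitian := by
  ext i j; fin_cases i <;> fin_cases j <;> simp [pX]

lemma pX_sq : pX * pX = 1 := by
  ext i j; fin_cases i <;> fin_cases j <;> simp [pX]

lemma sqrt3_sq : ((Real.sqrt 3 : ℝ) : ℂ)⁻¹ * ((Real.sqrt 3 : ℝ) : ℂ)⁻¹ = 1 / 3 := by
  rw [← mul_inv, ← Complex.ofReal_mul, Real.mul_self_sqrt (by norm_num)]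
  norm_num

lemma w_trace (v : ℝ) (O : Matrix (Fin 2 × Fin 2 × Fin 2) (Fin 2 × Fin 2 × Fin 2) ℂ) :
    (O * wNoisy v).trace = (v : ℂ) * (wVec ⬝ᵥ (O *ᵥ wVec)) + (1 - v) / 8 * O.trace := by
  have hs : star wVec = wVec := by
    ext i
    simp only [wVec, Pi.star_apply]
    split_ifs <;> simp
  rw [wNoisy, hs, Matrix.mul_add, Matrix.trace_add, Matrix.mul_smul, Matrix.mul_smul,
    Matrix.mul_smul, Matrix.mul_one, Matrix.trace_smul, Matrix.trace_smul, Matrix.trace_smul,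
    Matrix.mul_vecMulVec, Matrix.trace_vecMulVec, dotProduct_comm]
  simp only [smul_eq_mul]
  push_cast
  ring

lemma w_X (v : ℝ) : ((pX ⊗ₖ ((1 : Matrix (Fin 2) (Fin 2) ℂ) ⊗ₖ (1 : Matrix (Fin 2) (Fin 2) ℂ)))
      * wNoisy v).trace = 0 ∧
    (((1 : Matrix (Fin 2) (Fin 2) ℂ) ⊗ₖ (pX ⊗ₖ (1 : Matrix (Fin 2) (Fin 2) ℂ)))
      * wNoisy v).trace = 0 ∧
    (((1 : Matrix (Fin 2) (Fin 2) ℂ) ⊗ₖ ((1 : Matrix (Fin 2) (Fin 2) ℂ) ⊗ₖ pX))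
      * wNoisy v).trace = 0 := by
  refine ⟨?_, ?_, ?_⟩ <;> rw [w_trace] <;>
    simp [Matrix.trace_kronecker, dotProduct, Matrix.mulVec, Fintype.sum_prod_type, wVec, pX,
      Matrix.trace_fin_two]

lemma w_XX (v : ℝ) : ((pX ⊗ₖ (pX ⊗ₖ (1 : Matrix (Fin 2) (Fin 2) ℂ)))
      * wNoisy v).trace = 2 * v / 3 ∧
    (((1 : Matrix (Fin 2) (Fin 2) ℂ) ⊗ₖ (pX ⊗ₖ pX)) * wNoisy v).trace = 2 * v / 3 ∧
    ((pX ⊗ₖ ((1 : Matrix (Fin 2) (Fin 2) ℂ) ⊗ₖ pX)) * wNoisy v).trace = 2 * v / 3 := by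
  refine ⟨?_, ?_, ?_⟩ <;> rw [w_trace] <;>
    simp [Matrix.trace_kronecker, dotProduct, Matrix.mulVec, Fintype.sum_prod_type, wVec, pX,
      Matrix.trace_fin_two, sqrt3_sq] <;> ring

lemma dual_herm {n : Type*} {L : ℕ} (K : Fin L → Matrix (Fin 2) n ℂ) :
    (∑ l, (K l)ᴴ * pX * K l).IsHermitian := by
  rw [Matrix.IsHermitian, Matrix.conjTranspose_sum]
  simp [Matrix.conjTranspose_mul, pX_herm.eq, Matrix.mul_assoc]

lemma party1 {d L : ℕ} {σ τ : Matrix (Fin d) (Fin d) ℂ} (K : Fin L → Matrix (Fin 2) (D2 d) ℂ)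
    (hK : ∑ l, (K l)ᴴ * K l = 1)
    (hσ : σ.PosSemidef) (hτ : τ.PosSemidef) (hσ1 : σ.trace = 1) (hτ1 : τ.trace = 1)
    {M : Matrix (D2 d) (D2 d) ℂ} (hM : M = ∑ l, (K l)ᴴ * pX * K l)
    (h0 : (M * (σ ⊗ₖ τ)).trace = 0) :
    (rFst τ M * rFst τ M * σ).trace + (rSnd σ M * rSnd σ M * τ).trace ≤ 1 := by
  refine (party hσ hτ hσ1 hτ1 (hM ▸ dual_herm K) h0).trans ?_
  have := kadison K hK pX pX_herm pX_sq (hσ.kronecker hτ)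
  rwa [← hM, Matrix.trace_kronecker, hσ1, hτ1, one_mul] at this

/-- For `3/4 < v ≤ 1`, the noisy W state
`v|W⟩⟨W| + (1−v)·1/8` cannot be prepared in the triangle network with local
channels. -/
theorem stmt13 (v : ℝ) (hv₁ : 3 / 4 < v) (hv₂ : v ≤ 1) :
    ¬ ∃ (d : ℕ), 1 ≤ d ∧
      ∃ (LA LB LC : ℕ)
        (ρa ρb ρc : Matrix (D2 d) (D2 d) ℂ)
        (KA : Fin LA → Matrix (Fin 2) (D2 d) ℂ)
        (KB : Fin LB → Matrix (Fin 2) (D2 d) ℂ)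
        (KC : Fin LC → Matrix (Fin 2) (D2 d) ℂ),
        IsDensity ρa ∧ IsDensity ρb ∧ IsDensity ρc ∧
        (∑ l, (KA l)ᴴ * KA l = 1) ∧
        (∑ l, (KB l)ᴴ * KB l = 1) ∧
        (∑ l, (KC l)ᴴ * KC l = 1) ∧
        ctnState ρa ρb ρc KA KB KC = wNoisy v := by
  rintro ⟨d, -, LA, LB, LC, ρa, ρb, ρc, KA, KB, KC, ⟨ha, ha1⟩, ⟨hb, hb1⟩, ⟨hc, hc1⟩,
    hA, hB, hC, h⟩
  have T := trace_ctn ρa ρb ρc KA KB KC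
  rw [h] at T
  have oA : ∑ l, (KA l)ᴴ * (1 : Matrix (Fin 2) (Fin 2) ℂ) * KA l = 1 := by simpa using hA
  have oB : ∑ l, (KB l)ᴴ * (1 : Matrix (Fin 2) (Fin 2) ℂ) * KB l = 1 := by simpa using hB
  have oC : ∑ l, (KC l)ᴴ * (1 : Matrix (Fin 2) (Fin 2) ℂ) * KC l = 1 := by simpa using hC
  obtain ⟨x1, x2, x3⟩ := w_X v
  obtain ⟨y1, y2, y3⟩ := w_XX v
  rw [T, oB, oC] at x1
  rw [T, oA, oC] at x2
  rw [T, oA, oB] at x3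
  rw [T, oC] at y1
  rw [T, oA] at y2
  rw [T, oB] at y3
  have hMA := dual_herm KA
  have hMB := dual_herm KB
  have hMC := dual_herm KC
  have pA := fun σ τ hσ hτ hσ1 hτ1 => party1 (σ := σ) (τ := τ) KA hA hσ hτ hσ1 hτ1 rfl
  have pB := fun σ τ hσ hτ hσ1 hτ1 => party1 (σ := σ) (τ := τ) KB hB hσ hτ hσ1 hτ1 rfl
  have pC := fun σ τ hσ hτ hσ1 hτ1 => party1 (σ := σ) (τ := τ) KC hC hσ hτ hσ1 hτ1 rfl
  generalize (∑ l, (KA l)ᴴ * pX * KA l) = MA at *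
  generalize (∑ l, (KB l)ᴴ * pX * KB l) = MB at *
  generalize (∑ l, (KC l)ᴴ * pX * KC l) = MC at *
  rw [TT_cyc] at x2 y2
  rw [TT_cyc, TT_cyc] at x3 y3
  rw [TT_A _ _ _ _ ha1] at x1
  rw [TT_A _ _ _ _ hb1] at x2
  rw [TT_A _ _ _ _ hc1] at x3
  rw [TT_AB] at y1 y2 y3
  have pa1 := posSemidef_ptrace1 ha
  have pa2 := posSemidef_ptrace2 ha
  have pb1 := posSemidef_ptrace1 hb
  have pb2 := posSemidef_ptrace2 hb
  have pc1 := posSemidef_ptrace1 hc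
  have pc2 := posSemidef_ptrace2 hc
  have ta1 := (trace_ptrace1 ρa).trans ha1
  have ta2 := (trace_ptrace2 ρa).trans ha1
  have tb1 := (trace_ptrace1 ρb).trans hb1
  have tb2 := (trace_ptrace2 ρb).trans hb1
  have tc1 := (trace_ptrace1 ρc).trans hc1
  have tc2 := (trace_ptrace2 ρc).trans hc1
  have qA := pA _ _ pb1 pc2 tb1 tc2 x1
  have qB := pB _ _ pc1 pa2 tc1 ta2 x2
  have qC := pC _ _ pa1 pb2 ta1 tb2 x3
  have r1 := pairIneq hc (rSnd_herm pb1.1 hMA) (rFst_herm pa2.1 hMB)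
  have r2 := pairIneq ha (rSnd_herm pc1.1 hMB) (rFst_herm pb2.1 hMC)
  have r3 := pairIneq hb (rSnd_herm pa1.1 hMC) (rFst_herm pc2.1 hMA)
  rw [y1] at r1
  rw [y2] at r2
  rw [y3] at r3
  have fin : 2 * (2 * (v : ℂ) / 3) + 2 * (2 * (v : ℂ) / 3) + 2 * (2 * (v : ℂ) / 3) ≤ 1 + 1 + 1 := by
    refine (add_le_add (add_le_add r1 r2) r3).trans ?_
    refine le_trans (le_of_eq ?_) (add_le_add (add_le_add qA qB) qC)
    ring
  have e : 2 * (2 * (v : ℂ) / 3) + 2 * (2 * (v : ℂ) / 3) + 2 * (2 * (v : ℂ) / 3)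
      = ((4 * v : ℝ) : ℂ) := by push_cast; ring
  rw [e, show (1 + 1 + 1 : ℂ) = ((3 : ℝ) : ℂ) by norm_num, Complex.real_le_real] at fin
  linarith
end
end

section
/- Let |GHZ⟩ = (|000⟩ + |111⟩)/√2 in (C²)^⊗3. For every triangle network state with local channels on three qubits, i.e. every state of the form ρ = (E_A ⊗ E_B ⊗ E_C)(ρ_b ⊗ ρ_c ⊗ ρ_a) for some d ≥ 1, density matrices ρ_a, ρ_b, ρ_c on C^d ⊗ C^d and quantum channels E_A, E_B, E_C from (C^d ⊗ C^d)-matrices to 2×2 matrices (with the tensor factors arranged in the basic triangle network ordering), the fidelity to the GHZ state is bounded as ⟨GHZ| ρ |GHZ⟩ ≤ 3 − √5. -/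
open Matrix Kronecker BigOperators
open scoped ComplexOrder

noncomputable section

/-- The three-qubit GHZ state vector `(|000⟩ + |111⟩)/√2`. -/
def ghzVec : Fin 2 × Fin 2 × Fin 2 → ℂ := fun i =>
  if i = (0, 0, 0) ∨ i = (1, 1, 1) then ((Real.sqrt 2)⁻¹ : ℝ) else 0

/-- The GHZ state mixed with white noise, `v |GHZ⟩⟨GHZ| + (1−v) 1/8`. -/
def ghzNoisy (v : ℝ) : Matrix (Fin 2 × Fin 2 × Fin 2) (Fin 2 × Fin 2 × Fin 2) ℂ :=
  (v : ℂ) • vecMulVec ghzVec (star ghzVec) +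
    ((1 - v : ℝ) : ℂ) • ((8 : ℂ)⁻¹ • (1 : Matrix (Fin 2 × Fin 2 × Fin 2) (Fin 2 × Fin 2 × Fin 2) ℂ))


set_option linter.unusedSimpArgs false

def nred2 {d : ℕ} (M : Matrix (D2 d) (D2 d) ℂ) (σ : Matrix (Fin d) (Fin d) ℂ) :
    Matrix (Fin d) (Fin d) ℂ :=
  Matrix.of fun i j => ∑ k, ∑ k', M (k, i) (k', j) * σ k' k

def nred1 {d : ℕ} (M : Matrix (D2 d) (D2 d) ℂ) (σ : Matrix (Fin d) (Fin d) ℂ) :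
    Matrix (Fin d) (Fin d) ℂ :=
  Matrix.of fun i j => ∑ k, ∑ k', M (i, k) (j, k') * σ k' k

section lemmas
variable {d : ℕ}

lemma nred2_trace (X : Matrix (D2 d) (D2 d) ℂ) (σ τ : Matrix (Fin d) (Fin d) ℂ) :
    (X * (σ ⊗ₖ τ)).trace = (nred2 X σ * τ).trace := by
  simp only [Matrix.trace, Matrix.diag_apply, Matrix.mul_apply, Fintype.sum_prod_type,
    kroneckerMap_apply, nred2, Matrix.of_apply, Finset.sum_mul]
  rw [Finset.sum_comm]
  refine Finset.sum_congr rfl fun i _ => ?_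
  rw [Finset.sum_comm' (t' := Finset.univ) (s' := fun _ => Finset.univ) (by simp)]
  conv_rhs => rw [Finset.sum_comm]
  rw [Finset.sum_comm]
  refine Finset.sum_congr rfl fun k _ => ?_
  rw [Finset.sum_comm]
  refine Finset.sum_congr rfl fun k' _ => ?_
  refine Finset.sum_congr rfl fun j _ => ?_
  ring

lemma nred1_trace (X : Matrix (D2 d) (D2 d) ℂ) (σ τ : Matrix (Fin d) (Fin d) ℂ) :
    (X * (σ ⊗ₖ τ)).trace = (nred1 X τ * σ).trace := by
  simp only [Matrix.trace, Matrix.diag_apply, Matrix.mul_apply, Fintype.sum_prod_type,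
    kroneckerMap_apply, nred1, Matrix.of_apply, Finset.sum_mul]
  refine Finset.sum_congr rfl fun i _ => ?_
  rw [Finset.sum_comm]
  refine Finset.sum_congr rfl fun k _ => ?_
  refine Finset.sum_congr rfl fun k' _ => ?_
  refine Finset.sum_congr rfl fun j _ => ?_
  ring

lemma nred2_mulL (X : Matrix (D2 d) (D2 d) ℂ) (N σ : Matrix (Fin d) (Fin d) ℂ) :
    nred2 (((1 : Matrix (Fin d) (Fin d) ℂ) ⊗ₖ N) * X) σ = N * nred2 X σ := by
  ext i j
  simp only [nred2, Matrix.of_apply, Matrix.mul_apply, Fintype.sum_prod_type,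
    kroneckerMap_apply, Matrix.one_apply, ite_mul, one_mul, zero_mul, Finset.sum_mul,
    Finset.mul_sum, Finset.sum_ite_irrel, Finset.sum_const_zero, Finset.sum_ite_eq,
    Finset.mem_univ, if_true]
  conv_rhs => rw [Finset.sum_comm]
  refine Finset.sum_congr rfl fun k _ => ?_
  conv_rhs => rw [Finset.sum_comm]
  simp only [mul_assoc]

lemma nred2_mulR (X : Matrix (D2 d) (D2 d) ℂ) (N σ : Matrix (Fin d) (Fin d) ℂ) :
    nred2 (X * ((1 : Matrix (Fin d) (Fin d) ℂ) ⊗ₖ N)) σ = nred2 X σ * N := by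
  ext i j
  simp only [nred2, Matrix.of_apply, Matrix.mul_apply, Fintype.sum_prod_type,
    kroneckerMap_apply, Matrix.one_apply, ite_mul, one_mul, zero_mul, Finset.sum_mul, mul_ite,
    mul_zero,
    Finset.mul_sum, Finset.sum_ite_irrel, Finset.sum_const_zero, Finset.sum_ite_eq,Finset.sum_ite_eq',
    Finset.mem_univ, if_true]
  conv_rhs => rw [Finset.sum_comm]
  refine Finset.sum_congr rfl fun k _ => ?_
  conv_rhs => rw [Finset.sum_comm]
  refine Finset.sum_congr rfl fun k' _ => ?_
  refine Finset.sum_congr rfl fun j _ => ?_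
  ring

lemma nred1_mulL (X : Matrix (D2 d) (D2 d) ℂ) (N σ : Matrix (Fin d) (Fin d) ℂ) :
    nred1 ((N ⊗ₖ (1 : Matrix (Fin d) (Fin d) ℂ)) * X) σ = N * nred1 X σ := by
  ext i j
  simp only [nred1, Matrix.of_apply, Matrix.mul_apply, Fintype.sum_prod_type,
    kroneckerMap_apply, Matrix.one_apply, ite_mul, one_mul, zero_mul, Finset.sum_mul, mul_ite,
    mul_zero, mul_one,
    Finset.mul_sum, Finset.sum_ite_irrel, Finset.sum_const_zero, Finset.sum_ite_eq,Finset.sum_ite_eq',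
    Finset.mem_univ, if_true]
  conv_rhs => rw [Finset.sum_comm]
  refine Finset.sum_congr rfl fun k _ => ?_
  conv_rhs => rw [Finset.sum_comm]
  simp only [mul_assoc]

lemma nred1_mulR (X : Matrix (D2 d) (D2 d) ℂ) (N σ : Matrix (Fin d) (Fin d) ℂ) :
    nred1 (X * (N ⊗ₖ (1 : Matrix (Fin d) (Fin d) ℂ))) σ = nred1 X σ * N := by
  ext i j
  simp only [nred1, Matrix.of_apply, Matrix.mul_apply, Fintype.sum_prod_type,
    kroneckerMap_apply, Matrix.one_apply, ite_mul, one_mul, zero_mul, Finset.sum_mul, mul_ite,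
    mul_zero, mul_one,
    Finset.mul_sum, Finset.sum_ite_irrel, Finset.sum_const_zero, Finset.sum_ite_eq,Finset.sum_ite_eq',
    Finset.mem_univ, if_true]
  conv_rhs => rw [Finset.sum_comm]
  refine Finset.sum_congr rfl fun k _ => ?_
  conv_rhs => rw [Finset.sum_comm]
  refine Finset.sum_congr rfl fun k' _ => ?_
  refine Finset.sum_congr rfl fun j _ => ?_
  ring

lemma nred2_herm {X : Matrix (D2 d) (D2 d) ℂ} {σ : Matrix (Fin d) (Fin d) ℂ}
    (hX : X.IsHermitian) (hσ : σ.IsHermitian) : (nred2 X σ).IsHermitian := by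
  ext i j
  simp only [nred2, Matrix.conjTranspose_apply, Matrix.of_apply, star_sum, star_mul']
  rw [Finset.sum_comm]
  refine Finset.sum_congr rfl fun k' _ => Finset.sum_congr rfl fun j _ => ?_
  rw [hX.apply, hσ.apply]

lemma nred1_herm {X : Matrix (D2 d) (D2 d) ℂ} {σ : Matrix (Fin d) (Fin d) ℂ}
    (hX : X.IsHermitian) (hσ : σ.IsHermitian) : (nred1 X σ).IsHermitian := by
  ext i j
  simp only [nred1, Matrix.conjTranspose_apply, Matrix.of_apply, star_sum, star_mul']
  rw [Finset.sum_comm]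
  refine Finset.sum_congr rfl fun k' _ => Finset.sum_congr rfl fun j _ => ?_
  rw [hX.apply, hσ.apply]

lemma nred2_one {σ : Matrix (Fin d) (Fin d) ℂ} (hσ : σ.trace = 1) : nred2 1 σ = 1 := by
  ext i j
  have h2 : ∑ x, σ x x = 1 := hσ
  by_cases h : i = j <;> simp [nred2, Matrix.one_apply, h, h2]

lemma nred1_one {σ : Matrix (Fin d) (Fin d) ℂ} (hσ : σ.trace = 1) : nred1 1 σ = 1 := by
  ext i j
  have h2 : ∑ x, σ x x = 1 := hσ
  by_cases h : i = j <;> simp [nred1, Matrix.one_apply, h, h2]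

lemma ptr2_trace (N : Matrix (Fin d) (Fin d) ℂ) (ρ : Matrix (D2 d) (D2 d) ℂ) :
    ((N ⊗ₖ (1 : Matrix (Fin d) (Fin d) ℂ)) * ρ).trace = (N * ptrace₂ ρ).trace := by
  simp only [Matrix.trace, Matrix.diag_apply, Matrix.mul_apply, Fintype.sum_prod_type,
    kroneckerMap_apply, ptrace₂, Matrix.of_apply, Finset.mul_sum, Matrix.one_apply, mul_ite, ite_mul,
    mul_zero, mul_one, zero_mul, Finset.sum_ite_eq, Finset.mem_univ, if_true]
  refine Finset.sum_congr rfl fun i _ => ?_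
  rw [Finset.sum_comm]

lemma ptr1_trace (N : Matrix (Fin d) (Fin d) ℂ) (ρ : Matrix (D2 d) (D2 d) ℂ) :
    (((1 : Matrix (Fin d) (Fin d) ℂ) ⊗ₖ N) * ρ).trace = (N * ptrace₁ ρ).trace := by
  simp only [Matrix.trace, Matrix.diag_apply, Matrix.mul_apply, Fintype.sum_prod_type,
    kroneckerMap_apply, ptrace₁, Matrix.of_apply, Finset.mul_sum, Matrix.one_apply, mul_ite, ite_mul,
    mul_zero, one_mul, zero_mul, Finset.sum_ite_eq, Finset.mem_univ, if_true,
    Finset.sum_ite_irrel, Finset.sum_const_zero]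
  rw [Finset.sum_comm]
  refine Finset.sum_congr rfl fun i _ => ?_
  rw [Finset.sum_comm]

lemma ptr2_dens {ρ : Matrix (D2 d) (D2 d) ℂ} (h : IsDensity ρ) : IsDensity (ptrace₂ ρ) := by
  constructor
  · have : ptrace₂ ρ = ∑ k, ρ.submatrix (fun i => (i, k)) (fun i => (i, k)) := by
      ext i j; simp [ptrace₂, Matrix.sum_apply]
    rw [this]
    exact Matrix.posSemidef_sum _ fun k _ => h.1.submatrix _
  · have := ptr2_trace 1 ρ
    simp only [Matrix.one_kronecker_one, one_mul] at this
    rw [← this, h.2]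

lemma ptr1_dens {ρ : Matrix (D2 d) (D2 d) ℂ} (h : IsDensity ρ) : IsDensity (ptrace₁ ρ) := by
  constructor
  · have : ptrace₁ ρ = ∑ k, ρ.submatrix (fun i => (k, i)) (fun i => (k, i)) := by
      ext i j; simp [ptrace₁, Matrix.sum_apply]
    rw [this]
    exact Matrix.posSemidef_sum _ fun k _ => h.1.submatrix _
  · have := ptr1_trace 1 ρ
    simp only [Matrix.one_kronecker_one, one_mul] at this
    rw [← this, h.2]

lemma kron_dens {σ τ : Matrix (Fin d) (Fin d) ℂ} (h : IsDensity σ) (h' : IsDensity τ) :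
    IsDensity (σ ⊗ₖ τ) :=
  ⟨h.1.kronecker h'.1, by rw [Matrix.trace_kronecker, h.2, h'.2, one_mul]⟩

lemma tr_mul_nonneg {n : Type*} [Fintype n] {ρ : Matrix n n ℂ}
    (h : ρ.PosSemidef) (X : Matrix n n ℂ) (hX : X.IsHermitian) : 0 ≤ ((X * X * ρ).trace).re := by
  have h1 := (h.mul_mul_conjTranspose_same X).trace_nonneg
  rw [hX.eq, Matrix.trace_mul_comm, ← mul_assoc] at h1
  exact (Complex.le_def.1 h1).1

lemma tr_real {n : Type*} [Fintype n] {X ρ : Matrix n n ℂ} 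
    (h : ρ.IsHermitian) (hX : X.IsHermitian) : ((X * ρ).trace).im = 0 := by
  have h1 : star ((X * ρ).trace) = (X * ρ).trace := by
    rw [← Matrix.trace_conjTranspose, Matrix.conjTranspose_mul, hX.eq, h.eq, Matrix.trace_mul_comm]
  exact Complex.conj_eq_iff_im.1 h1


lemma var_bound {σ τ : Matrix (Fin d) (Fin d) ℂ} (hσ : IsDensity σ) (hτ : IsDensity τ)
    {X : Matrix (D2 d) (D2 d) ℂ} (hX : X.IsHermitian)
    (hX1 : ((X * X * (σ ⊗ₖ τ)).trace).re ≤ 1) :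
    ((nred2 X σ * nred2 X σ * τ).trace).re + ((nred1 X τ * nred1 X τ * σ).trace).re ≤
      1 + ((X * (σ ⊗ₖ τ)).trace).re ^ 2 := by
  have hω := kron_dens hσ hτ
  have him := tr_real hω.1.1 hX
  obtain ⟨r, hr⟩ : ∃ r : ℝ, (X * (σ ⊗ₖ τ)).trace = (r : ℂ) := ⟨_, Complex.ext rfl him⟩
  have hN1 := nred1_herm hX hτ.1.1
  have hN2 := nred2_herm hX hσ.1.1
  set N1 := nred1 X τ with hN1d
  set N2 := nred2 X σ with hN2d
  set A : Matrix (D2 d) (D2 d) ℂ := N1 ⊗ₖ (1 : Matrix (Fin d) (Fin d) ℂ) with hA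
  set B : Matrix (D2 d) (D2 d) ℂ := (1 : Matrix (Fin d) (Fin d) ℂ) ⊗ₖ N2 with hB
  set ω := σ ⊗ₖ τ with hωd
  have hAh : A.IsHermitian := by
    rw [Matrix.IsHermitian, hA, Matrix.conjTranspose_kronecker, hN1.eq, Matrix.conjTranspose_one]
  have hBh : B.IsHermitian := by
    rw [Matrix.IsHermitian, hB, Matrix.conjTranspose_kronecker, hN2.eq, Matrix.conjTranspose_one]
  have hR : (X - A - B + (r : ℂ) • (1 : Matrix (D2 d) (D2 d) ℂ)).IsHermitian := by
    refine ((hX.sub hAh).sub hBh).add ?_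
    rw [Matrix.IsHermitian, Matrix.conjTranspose_smul, Matrix.conjTranspose_one]
    simp
  have key := tr_mul_nonneg hω.1 _ hR
  have e1 : (X * A * ω).trace = (N1 * N1 * σ).trace := by
    rw [hωd, nred1_trace, hA, nred1_mulR]
  have e2 : (A * X * ω).trace = (N1 * N1 * σ).trace := by
    rw [hωd, nred1_trace, hA, nred1_mulL]
  have e3 : (X * B * ω).trace = (N2 * N2 * τ).trace := by
    rw [hωd, nred2_trace, hB, nred2_mulR]
  have e4 : (B * X * ω).trace = (N2 * N2 * τ).trace := by
    rw [hωd, nred2_trace, hB, nred2_mulL]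
  have hz1 : (N1 * σ).trace = r := by rw [← hr, hωd, nred1_trace]
  have hz2 : (N2 * τ).trace = r := by rw [← hr, hωd, nred2_trace]
  have e5 : (A * ω).trace = r := by
    rw [hωd, hA, ← Matrix.mul_kronecker_mul, Matrix.trace_kronecker, one_mul, hτ.2, hz1, mul_one]
  have e6 : (B * ω).trace = r := by
    rw [hωd, hB, ← Matrix.mul_kronecker_mul, Matrix.trace_kronecker, one_mul, hσ.2, hz2, one_mul]
  have e7 : (A * A * ω).trace = (N1 * N1 * σ).trace := by
    rw [hωd, hA, ← Matrix.mul_kronecker_mul, ← Matrix.mul_kronecker_mul, Matrix.trace_kronecker,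
      one_mul, one_mul, hτ.2, mul_one]
  have e8 : (B * B * ω).trace = (N2 * N2 * τ).trace := by
    rw [hωd, hB, ← Matrix.mul_kronecker_mul, ← Matrix.mul_kronecker_mul, Matrix.trace_kronecker,
      one_mul, one_mul, hσ.2, one_mul]
  have e9 : (A * B * ω).trace = r * r := by
    rw [hωd, hA, hB, ← Matrix.mul_kronecker_mul, ← Matrix.mul_kronecker_mul,
      Matrix.trace_kronecker, one_mul, mul_one, hz1, hz2]
  have e10 : (B * A * ω).trace = r * r := by
    rw [hωd, hA, hB, ← Matrix.mul_kronecker_mul, ← Matrix.mul_kronecker_mul,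
      Matrix.trace_kronecker, one_mul, mul_one, hz1, hz2]
  have hexp : ((X - A - B + (r : ℂ) • (1 : Matrix (D2 d) (D2 d) ℂ)) *
      (X - A - B + (r : ℂ) • (1 : Matrix (D2 d) (D2 d) ℂ)) * ω).trace =
      (X * X * ω).trace - (N1 * N1 * σ).trace - (N2 * N2 * τ).trace + r * r := by
    simp only [add_mul, sub_mul, mul_add, mul_sub, Matrix.trace_add, Matrix.trace_sub,
      smul_mul_assoc, mul_smul_comm, one_mul, mul_one, Matrix.trace_smul, smul_eq_mul,
      e1, e2, e3, e4, e5, e6, e7, e8, e9, e10, hr, hω.2]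
    ring
  rw [hexp] at key
  rw [hr]
  simp only [Complex.add_re, Complex.sub_re, Complex.mul_re, Complex.ofReal_re,
    Complex.ofReal_im] at key ⊢
  nlinarith

lemma cov_bound {ρ : Matrix (D2 d) (D2 d) ℂ} (hρ : IsDensity ρ)
    {N L : Matrix (Fin d) (Fin d) ℂ} (hN : N.IsHermitian) (hL : L.IsHermitian) :
    (((N ⊗ₖ L) * ρ).trace).re ≤
      ((N * ptrace₂ ρ).trace).re * ((L * ptrace₁ ρ).trace).re +
      (((N * N * ptrace₂ ρ).trace).re - ((N * ptrace₂ ρ).trace).re ^ 2 +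
        (((L * L * ptrace₁ ρ).trace).re - ((L * ptrace₁ ρ).trace).re ^ 2)) / 2 := by
  have him1 := tr_real (ptr2_dens hρ).1.1 hN
  have him2 := tr_real (ptr1_dens hρ).1.1 hL
  obtain ⟨x, hx⟩ : ∃ r : ℝ, (N * ptrace₂ ρ).trace = (r : ℂ) := ⟨_, Complex.ext rfl him1⟩
  obtain ⟨y, hy⟩ : ∃ r : ℝ, (L * ptrace₁ ρ).trace = (r : ℂ) := ⟨_, Complex.ext rfl him2⟩
  set A : Matrix (D2 d) (D2 d) ℂ := N ⊗ₖ (1 : Matrix (Fin d) (Fin d) ℂ) with hA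
  set B : Matrix (D2 d) (D2 d) ℂ := (1 : Matrix (Fin d) (Fin d) ℂ) ⊗ₖ L with hB
  have hAh : A.IsHermitian := by
    rw [Matrix.IsHermitian, hA, Matrix.conjTranspose_kronecker, hN.eq, Matrix.conjTranspose_one]
  have hBh : B.IsHermitian := by
    rw [Matrix.IsHermitian, hB, Matrix.conjTranspose_kronecker, hL.eq, Matrix.conjTranspose_one]
  have hR : (A - B + ((y - x : ℝ) : ℂ) • (1 : Matrix (D2 d) (D2 d) ℂ)).IsHermitian := by
    refine (hAh.sub hBh).add ?_
    rw [Matrix.IsHermitian, Matrix.conjTranspose_smul, Matrix.conjTranspose_one]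
    simp
  have key := tr_mul_nonneg hρ.1 _ hR
  have e1 : (A * A * ρ).trace = (N * N * ptrace₂ ρ).trace := by
    rw [hA, ← Matrix.mul_kronecker_mul, one_mul, ptr2_trace]
  have e2 : (B * B * ρ).trace = (L * L * ptrace₁ ρ).trace := by
    rw [hB, ← Matrix.mul_kronecker_mul, one_mul, ptr1_trace]
  have e3 : (A * B * ρ).trace = ((N ⊗ₖ L) * ρ).trace := by
    rw [hA, hB, ← Matrix.mul_kronecker_mul, one_mul, mul_one]
  have e4 : (B * A * ρ).trace = ((N ⊗ₖ L) * ρ).trace := by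
    rw [hA, hB, ← Matrix.mul_kronecker_mul, one_mul, mul_one]
  have e5 : (A * ρ).trace = x := by rw [hA, ptr2_trace, hx]
  have e6 : (B * ρ).trace = y := by rw [hB, ptr1_trace, hy]
  simp only [add_mul, sub_mul, mul_add, mul_sub, Matrix.trace_add, Matrix.trace_sub,
      smul_mul_assoc, mul_smul_comm, one_mul, mul_one, Matrix.trace_smul, smul_eq_mul,
      e1, e2, e3, e4, e5, e6, hρ.2] at key
  rw [hx, hy]
  simp only [Complex.add_re, Complex.sub_re, Complex.mul_re, Complex.ofReal_re,
    Complex.ofReal_im] at key ⊢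
  nlinarith

/-- The trilinear form giving the statistics of local effects in the triangle network. -/
def triT (ρa ρb ρc X Y Z : Matrix (D2 d) (D2 d) ℂ) : ℂ :=
  ∑ t : (D2 d × D2 d) × (D2 d × D2 d) × (D2 d × D2 d),
    ρb t.1.1 t.1.2 * ρc t.2.1.1 t.2.1.2 * ρa t.2.2.1 t.2.2.2 *
    (X (t.1.2.2, t.2.1.2.1) (t.1.1.2, t.2.1.1.1) *
     Y (t.2.1.2.2, t.2.2.2.1) (t.2.1.1.2, t.2.2.1.1) *
     Z (t.2.2.2.2, t.1.2.1) (t.2.2.1.2, t.1.1.1))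

lemma triT_cyc (ρa ρb ρc X Y Z : Matrix (D2 d) (D2 d) ℂ) :
    triT ρa ρb ρc X Y Z = triT ρb ρc ρa Y Z X := by
  unfold triT
  refine Fintype.sum_equiv
    ⟨fun t => (t.2.1, t.2.2, t.1), fun t => (t.2.2, t.1, t.2.1), fun _ => rfl, fun _ => rfl⟩
    _ _ fun t => ?_
  simp only [Equiv.coe_fn_mk]
  ring

lemma triT_add (ρa ρb ρc X X' Y Z : Matrix (D2 d) (D2 d) ℂ) :
    triT ρa ρb ρc (X + X') Y Z = triT ρa ρb ρc X Y Z + triT ρa ρb ρc X' Y Z := by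
  unfold triT
  rw [← Finset.sum_add_distrib]
  refine Finset.sum_congr rfl fun t _ => ?_
  simp only [Matrix.add_apply]; ring

lemma triT_sub (ρa ρb ρc X X' Y Z : Matrix (D2 d) (D2 d) ℂ) :
    triT ρa ρb ρc (X - X') Y Z = triT ρa ρb ρc X Y Z - triT ρa ρb ρc X' Y Z := by
  unfold triT
  rw [← Finset.sum_sub_distrib]
  refine Finset.sum_congr rfl fun t _ => ?_
  simp only [Matrix.sub_apply]; ring

lemma triT_sum {n : ℕ} (ρa ρb ρc : Matrix (D2 d) (D2 d) ℂ)
    (X : Fin n → Matrix (D2 d) (D2 d) ℂ) (Y Z : Matrix (D2 d) (D2 d) ℂ) :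
    triT ρa ρb ρc (∑ l, X l) Y Z = ∑ l, triT ρa ρb ρc (X l) Y Z := by
  unfold triT
  rw [Finset.sum_comm]
  refine Finset.sum_congr rfl fun t _ => ?_
  simp only [Matrix.sum_apply, Finset.sum_mul, Finset.mul_sum]

lemma aux_red2 (ρ X : Matrix (D2 d) (D2 d) ℂ) (i j : Fin d) :
    (∑ u : D2 d × D2 d, ρ u.1 u.2 * (X (u.2.2, i) (u.1.2, j) * if u.2.1 = u.1.1 then 1 else 0)) =
      nred2 X (ptrace₁ ρ) i j := by
  simp only [nred2, ptrace₁, Matrix.of_apply, Fintype.sum_prod_type, mul_ite, mul_one, mul_zero,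
    Finset.mul_sum, Finset.sum_ite_irrel, Finset.sum_const_zero, Finset.sum_ite_eq,
    Finset.sum_ite_eq', Finset.mem_univ, if_true]
  rw [Finset.sum_comm]
  conv_rhs => rw [Finset.sum_comm]
  refine Finset.sum_congr rfl fun k _ => ?_
  rw [Finset.sum_comm]
  refine Finset.sum_congr rfl fun k' _ => Finset.sum_congr rfl fun s _ => ?_
  ring

lemma aux_red1 (ρ X : Matrix (D2 d) (D2 d) ℂ) (i j : Fin d) :
    (∑ u : D2 d × D2 d, ρ u.1 u.2 * (X (i, u.2.1) (j, u.1.1) * if u.2.2 = u.1.2 then 1 else 0)) =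
      nred1 X (ptrace₂ ρ) i j := by
  simp only [nred1, ptrace₂, Matrix.of_apply, Fintype.sum_prod_type, mul_ite, mul_one, mul_zero,
    Finset.mul_sum, Finset.sum_ite_irrel, Finset.sum_const_zero, Finset.sum_ite_eq,
    Finset.sum_ite_eq', Finset.mem_univ, if_true]
  conv_rhs => rw [Finset.sum_comm]
  refine Finset.sum_congr rfl fun k _ => ?_
  rw [Finset.sum_comm]
  refine Finset.sum_congr rfl fun k' _ => Finset.sum_congr rfl fun s _ => ?_
  ring

lemma triT_one (ρa ρb ρc X Y : Matrix (D2 d) (D2 d) ℂ) :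
    triT ρa ρb ρc X Y 1 =
      ((nred2 X (ptrace₁ ρb) ⊗ₖ nred1 Y (ptrace₂ ρa)) * ρc).trace := by
  have h : ((nred2 X (ptrace₁ ρb) ⊗ₖ nred1 Y (ptrace₂ ρa)) * ρc).trace =
      ∑ v : D2 d × D2 d, ρc v.1 v.2 *
        (nred2 X (ptrace₁ ρb) v.2.1 v.1.1 * nred1 Y (ptrace₂ ρa) v.2.2 v.1.2) := by
    rw [Fintype.sum_prod_type, Finset.sum_comm]
    simp only [Matrix.trace, Matrix.diag_apply, Matrix.mul_apply, kroneckerMap_apply]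
    refine Finset.sum_congr rfl fun k _ => Finset.sum_congr rfl fun s _ => ?_
    ring
  rw [h]
  simp only [← aux_red1, ← aux_red2]
  unfold triT
  rw [Fintype.sum_prod_type, Finset.sum_comm' (t' := Finset.univ) (s' := fun _ => Finset.univ)
    (by simp), Fintype.sum_prod_type]
  refine Finset.sum_congr rfl fun v _ => ?_
  rw [Finset.sum_comm]
  rw [Finset.sum_mul_sum]
  simp only [Finset.mul_sum]
  refine Finset.sum_congr rfl fun u _ => Finset.sum_congr rfl fun w _ => ?_
  rw [Matrix.one_apply]
  simp only [Prod.mk.injEq]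
  by_cases h1 : w.2.2 = w.1.2 <;> by_cases h2 : u.2.1 = u.1.1 <;> simp [h1, h2] <;> ring

open scoped MatrixOrder in
lemma tr_mul_nonneg2 {n : Type*} [Fintype n] {P ρ : Matrix n n ℂ}
    (hP : P.PosSemidef) (h : ρ.PosSemidef) : 0 ≤ ((P * ρ).trace).re := by
  classical
  obtain ⟨S, rfl⟩ := CStarAlgebra.nonneg_iff_eq_star_mul_self.mp h.nonneg
  rw [Matrix.star_eq_conjTranspose]
  have h1 := (hP.mul_mul_conjTranspose_same S).trace_nonneg
  rw [Matrix.trace_mul_comm, ← mul_assoc, Matrix.trace_mul_comm] at h1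
  exact (Complex.le_def.1 h1).1

/-- The effect (dual channel applied to `|x⟩⟨x|`). -/
def effE {L : ℕ} (K : Fin L → Matrix (Fin 2) (D2 d) ℂ) (x : Fin 2) : Matrix (D2 d) (D2 d) ℂ :=
  ∑ l, Matrix.vecMulVec (star (K l x)) (K l x)

lemma effE_psd {L : ℕ} (K : Fin L → Matrix (Fin 2) (D2 d) ℂ) (x : Fin 2) :
    (effE K x).PosSemidef := by
  refine Matrix.posSemidef_sum _ fun l _ => ?_
  have := Matrix.posSemidef_vecMulVec_self_star (star (K l x))
  rwa [star_star] at this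

lemma effE_add {L : ℕ} {K : Fin L → Matrix (Fin 2) (D2 d) ℂ}
    (hK : ∑ l, (K l)ᴴ * K l = 1) : effE K 0 + effE K 1 = 1 := by
  rw [← hK, effE, effE, ← Finset.sum_add_distrib]
  refine Finset.sum_congr rfl fun l _ => ?_
  ext i j
  simp [Matrix.mul_apply, Matrix.vecMulVec_apply]

lemma effE_sq {L : ℕ} {K : Fin L → Matrix (Fin 2) (D2 d) ℂ}
    (hK : ∑ l, (K l)ᴴ * K l = 1) {ω : Matrix (D2 d) (D2 d) ℂ} (hω : IsDensity ω) :
    (((effE K 0 - effE K 1) * (effE K 0 - effE K 1) * ω).trace).re ≤ 1 := by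
  have h0 := effE_psd K 0
  have h1 := effE_psd K 1
  have h := effE_add hK
  set E := effE K 0
  have h1' : effE K 1 = 1 - E := by rw [← h]; abel
  rw [h1'] at h1 ⊢
  have a1 := tr_mul_nonneg2 (h1.mul_mul_conjTranspose_same E) hω.1
  have a2 := tr_mul_nonneg2 (h0.mul_mul_conjTranspose_same (1 - E)) hω.1
  rw [h0.1.eq] at a1
  rw [h1.1.eq] at a2
  have e : (E - (1 - E)) * (E - (1 - E)) =
      1 - (4 : ℂ) • (E * (1 - E) * E + (1 - E) * E * (1 - E)) := by
    have : (4 : ℂ) • (E * (1 - E) * E + (1 - E) * E * (1 - E)) =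
      4 * (E * (1 - E) * E + (1 - E) * E * (1 - E)) := by
      rw [show (4 : Matrix (D2 d) (D2 d) ℂ) = (4 : ℂ) • 1 by
        ext i j; by_cases hij : i = j <;> simp [hij, Matrix.ofNat_apply, Matrix.one_apply]]
      rw [smul_mul_assoc, one_mul]
    rw [this]; noncomm_ring
  rw [e, sub_mul, one_mul, Matrix.trace_sub, hω.2, smul_mul_assoc, Matrix.trace_smul, add_mul,
    Matrix.trace_add]
  have : ((4 : ℂ) • ((E * (1 - E) * E * ω).trace + ((1 - E) * E * (1 - E) * ω).trace)).re =
      4 * ((E * (1 - E) * E * ω).trace.re + ((1 - E) * E * (1 - E) * ω).trace.re) := by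
    simp [Complex.mul_re]
  rw [Complex.sub_re, this, Complex.one_re]
  linarith

lemma triT_sum2 {n : ℕ} (ρa ρb ρc : Matrix (D2 d) (D2 d) ℂ)
    (Y : Fin n → Matrix (D2 d) (D2 d) ℂ) (X Z : Matrix (D2 d) (D2 d) ℂ) :
    triT ρa ρb ρc X (∑ l, Y l) Z = ∑ l, triT ρa ρb ρc X (Y l) Z := by
  rw [triT_cyc, triT_sum]
  exact Finset.sum_congr rfl fun l _ => (triT_cyc _ _ _ _ _ _).symm

lemma triT_sum3 {n : ℕ} (ρa ρb ρc : Matrix (D2 d) (D2 d) ℂ)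
    (Z : Fin n → Matrix (D2 d) (D2 d) ℂ) (X Y : Matrix (D2 d) (D2 d) ℂ) :
    triT ρa ρb ρc X Y (∑ l, Z l) = ∑ l, triT ρa ρb ρc X Y (Z l) := by
  rw [triT_cyc, triT_sum2]
  exact Finset.sum_congr rfl fun l _ => (triT_cyc _ _ _ _ _ _).symm

lemma ctn_diag {LA LB LC : ℕ} (ρa ρb ρc : Matrix (D2 d) (D2 d) ℂ)
    (KA : Fin LA → Matrix (Fin 2) (D2 d) ℂ)
    (KB : Fin LB → Matrix (Fin 2) (D2 d) ℂ)
    (KC : Fin LC → Matrix (Fin 2) (D2 d) ℂ) (x y z : Fin 2) :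
    ctnState ρa ρb ρc KA KB KC (x, y, z) (x, y, z) =
      triT ρa ρb ρc (effE KA x) (effE KB y) (effE KC z) := by
  unfold effE ctnState
  simp only [Matrix.sum_apply]
  rw [triT_sum]
  refine Finset.sum_congr rfl fun l _ => ?_
  rw [triT_sum2]
  refine Finset.sum_congr rfl fun m _ => ?_
  rw [triT_sum3]
  refine Finset.sum_congr rfl fun n _ => ?_
  simp only [Matrix.mul_apply, Finset.sum_mul]
  rw [← Fintype.sum_prod_type']
  unfold triT
  refine Fintype.sum_equiv
    ⟨fun t => ((t.2.1, t.1.1), (t.2.2.1, t.1.2.1), (t.2.2.2, t.1.2.2)),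
     fun t => ((t.1.2, t.2.1.2, t.2.2.2), (t.1.1, t.2.1.1, t.2.2.1)), fun _ => rfl, fun _ => rfl⟩
    _ _ fun t => ?_
  simp only [Equiv.coe_fn_mk, globalKraus, btnState, kroneckerMap_apply, Matrix.of_apply,
    Matrix.conjTranspose_apply, Matrix.vecMulVec_apply, Pi.star_apply, star_mul']
  ring

lemma ctn_psd {LA LB LC : ℕ} {ρa ρb ρc : Matrix (D2 d) (D2 d) ℂ}
    (hρa : IsDensity ρa) (hρb : IsDensity ρb) (hρc : IsDensity ρc)
    (KA : Fin LA → Matrix (Fin 2) (D2 d) ℂ)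
    (KB : Fin LB → Matrix (Fin 2) (D2 d) ℂ)
    (KC : Fin LC → Matrix (Fin 2) (D2 d) ℂ) :
    (ctnState ρa ρb ρc KA KB KC).PosSemidef := by
  unfold ctnState btnState
  refine Matrix.posSemidef_sum _ fun l _ => Matrix.posSemidef_sum _ fun m _ =>
    Matrix.posSemidef_sum _ fun n _ => ?_
  exact (hρb.1.kronecker (hρc.1.kronecker hρa.1)).mul_mul_conjTranspose_same _

lemma triT_X {ρa ρb ρc : Matrix (D2 d) (D2 d) ℂ} (hρa : IsDensity ρa)
    (X : Matrix (D2 d) (D2 d) ℂ) : triT ρa ρb ρc X 1 1 =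
      (nred2 X (ptrace₁ ρb) * ptrace₂ ρc).trace := by
  rw [triT_one, nred1_one (ptr2_dens hρa).2, ptr2_trace]

lemma triT_Y {ρa ρb ρc : Matrix (D2 d) (D2 d) ℂ} (hρb : IsDensity ρb)
    (Y : Matrix (D2 d) (D2 d) ℂ) : triT ρa ρb ρc 1 Y 1 =
      (nred1 Y (ptrace₂ ρa) * ptrace₁ ρc).trace := by
  rw [triT_one, nred2_one (ptr1_dens hρb).2, ptr1_trace]

lemma net_cov {ρa ρb ρc : Matrix (D2 d) (D2 d) ℂ}
    (hρa : IsDensity ρa) (hρb : IsDensity ρb) (hρc : IsDensity ρc)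
    {X Y : Matrix (D2 d) (D2 d) ℂ} (hX : X.IsHermitian) (hY : Y.IsHermitian) :
    (triT ρa ρb ρc X Y 1).re ≤ (triT ρa ρb ρc X 1 1).re * (triT ρa ρb ρc 1 Y 1).re +
      (((nred2 X (ptrace₁ ρb) * nred2 X (ptrace₁ ρb) * ptrace₂ ρc).trace).re
        - (triT ρa ρb ρc X 1 1).re ^ 2 +
      (((nred1 Y (ptrace₂ ρa) * nred1 Y (ptrace₂ ρa) * ptrace₁ ρc).trace).re
        - (triT ρa ρb ρc 1 Y 1).re ^ 2)) / 2 := by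
  rw [triT_X hρa, triT_Y hρb, triT_one]
  exact cov_bound hρc (nred2_herm hX (ptr1_dens hρb).1.1) (nred1_herm hY (ptr2_dens hρa).1.1)

lemma net_var {L : ℕ} {ρa ρb ρc : Matrix (D2 d) (D2 d) ℂ}
    (hρa : IsDensity ρa) (hρb : IsDensity ρb) (hρc : IsDensity ρc)
    {K : Fin L → Matrix (Fin 2) (D2 d) ℂ} (hK : ∑ l, (K l)ᴴ * K l = 1)
    {X : Matrix (D2 d) (D2 d) ℂ} (hX : X = effE K 0 - effE K 1) :
    ((nred2 X (ptrace₁ ρb) * nred2 X (ptrace₁ ρb) * ptrace₂ ρc).trace).re +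
    ((nred1 X (ptrace₂ ρc) * nred1 X (ptrace₂ ρc) * ptrace₁ ρb).trace).re ≤
      1 + (triT ρa ρb ρc X 1 1).re ^ 2 := by
  rw [triT_X hρa, ← nred2_trace, hX]
  exact var_bound (ptr1_dens hρb) (ptr2_dens hρc) ((effE_psd K 0).1.sub (effE_psd K 1).1)
    (effE_sq hK (kron_dens (ptr1_dens hρb) (ptr2_dens hρc)))

lemma net_total {LA LB LC : ℕ} {ρa ρb ρc : Matrix (D2 d) (D2 d) ℂ}
    (hρa : IsDensity ρa) (hρb : IsDensity ρb) (hρc : IsDensity ρc)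
    {KA : Fin LA → Matrix (Fin 2) (D2 d) ℂ} (hKA : ∑ l, (KA l)ᴴ * KA l = 1)
    {KB : Fin LB → Matrix (Fin 2) (D2 d) ℂ} (hKB : ∑ l, (KB l)ᴴ * KB l = 1)
    {KC : Fin LC → Matrix (Fin 2) (D2 d) ℂ} (hKC : ∑ l, (KC l)ᴴ * KC l = 1)
    {X Y Z : Matrix (D2 d) (D2 d) ℂ} (hX : X = effE KA 0 - effE KA 1)
    (hY : Y = effE KB 0 - effE KB 1) (hZ : Z = effE KC 0 - effE KC 1) :
    (triT ρa ρb ρc X Y 1).re + (triT ρa ρb ρc 1 Y Z).re + (triT ρa ρb ρc X 1 Z).re ≤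
      (triT ρa ρb ρc X 1 1).re * (triT ρa ρb ρc 1 Y 1).re +
      (triT ρa ρb ρc 1 Y 1).re * (triT ρa ρb ρc 1 1 Z).re +
      (triT ρa ρb ρc 1 1 Z).re * (triT ρa ρb ρc X 1 1).re +
      (3 - (triT ρa ρb ρc X 1 1).re ^ 2 - (triT ρa ρb ρc 1 Y 1).re ^ 2 -
        (triT ρa ρb ρc 1 1 Z).re ^ 2) / 2 := by
  have hXh : X.IsHermitian := hX ▸ (effE_psd KA 0).1.sub (effE_psd KA 1).1
  have hYh : Y.IsHermitian := hY ▸ (effE_psd KB 0).1.sub (effE_psd KB 1).1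
  have hZh : Z.IsHermitian := hZ ▸ (effE_psd KC 0).1.sub (effE_psd KC 1).1
  have c1 := net_cov hρa hρb hρc hXh hYh
  have c2 := net_cov hρb hρc hρa hYh hZh
  have c3 := net_cov hρc hρa hρb hZh hXh
  have v1 := net_var hρa hρb hρc hKA hX
  have v2 := net_var hρb hρc hρa hKB hY
  have v3 := net_var hρc hρa hρb hKC hZ
  simp only [← triT_cyc ρa ρb ρc] at c2 v2
  rw [← triT_cyc ρb ρc ρa, ← triT_cyc ρa ρb ρc] at v3
  have t1 : ∀ U V W, triT ρc ρa ρb U V W = triT ρa ρb ρc V W U := fun U V W =>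
    (triT_cyc ρc ρa ρb U V W)
  simp only [t1] at c3
  linarith

lemma final_arith {p0 p1 c q1 q2 q3 q4 q5 q6 : ℝ}
    (h0 : 0 ≤ p0) (h1 : 0 ≤ p1) (hq1 : 0 ≤ q1) (hq2 : 0 ≤ q2) (hq3 : 0 ≤ q3)
    (hq4 : 0 ≤ q4) (hq5 : 0 ≤ q5) (hq6 : 0 ≤ q6)
    (hs : p0 + p1 + q1 + q2 + q3 + q4 + q5 + q6 = 1)
    (hc : c ^ 2 ≤ p0 * p1) {s : ℝ}
    (hsd : s = 3 * (p0 - p1) + (q1 + q2 + q3 - q4 - q5 - q6))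
    (hP : p0 + p1 ≤ 5 / 8 + s ^ 2 / 24) : (p0 + p1) / 2 + c ≤ 3 - Real.sqrt 5 := by
  have h5 : Real.sqrt 5 ≤ 2.237 := by
    rw [Real.sqrt_le_left (by norm_num)]; norm_num
  suffices h : (p0 + p1) / 2 + c ≤ 0.763 by linarith
  by_contra! hF
  obtain ⟨P, hPd⟩ : ∃ P, P = p0 + p1 := ⟨_, rfl⟩
  obtain ⟨D, hD⟩ : ∃ D, D = p0 - p1 := ⟨_, rfl⟩
  obtain ⟨r, hr⟩ : ∃ r, r = q1 + q2 + q3 - q4 - q5 - q6 := ⟨_, rfl⟩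
  have hP1 : P ≤ 1 := by linarith
  have h4 : 4 * (p0 * p1) = P ^ 2 - D ^ 2 := by rw [hPd, hD]; ring
  have hc2 : (1.526 - P) ^ 2 ≤ (2 * c) ^ 2 := by
    apply pow_le_pow_left₀ <;> linarith
  have hDb : D ^ 2 ≤ 3.052 * P - 1.526 ^ 2 := by nlinarith
  have hr2 : r ^ 2 ≤ (1 - P) ^ 2 := by
    apply sq_le_sq' <;> linarith
  have hs2 : s ^ 2 ≤ 10 * D ^ 2 + 10 * r ^ 2 := by
    rw [hsd, ← hr, ← hD]; nlinarith [sq_nonneg (D - 3 * r)]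
  have hPf : 0.763 ≤ P := by nlinarith [sq_nonneg D]
  nlinarith

lemma triT_add2 (ρa ρb ρc X Y Y' Z : Matrix (D2 d) (D2 d) ℂ) :
    triT ρa ρb ρc X (Y + Y') Z = triT ρa ρb ρc X Y Z + triT ρa ρb ρc X Y' Z := by
  rw [triT_cyc, triT_add, ← triT_cyc ρa ρb ρc, ← triT_cyc ρa ρb ρc]

lemma triT_sub2 (ρa ρb ρc X Y Y' Z : Matrix (D2 d) (D2 d) ℂ) :
    triT ρa ρb ρc X (Y - Y') Z = triT ρa ρb ρc X Y Z - triT ρa ρb ρc X Y' Z := by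
  rw [triT_cyc, triT_sub, ← triT_cyc ρa ρb ρc, ← triT_cyc ρa ρb ρc]

lemma triT_add3 (ρa ρb ρc X Y Z Z' : Matrix (D2 d) (D2 d) ℂ) :
    triT ρa ρb ρc X Y (Z + Z') = triT ρa ρb ρc X Y Z + triT ρa ρb ρc X Y Z' := by
  rw [triT_cyc, triT_add2, ← triT_cyc ρa ρb ρc, ← triT_cyc ρa ρb ρc]

lemma triT_sub3 (ρa ρb ρc X Y Z Z' : Matrix (D2 d) (D2 d) ℂ) :
    triT ρa ρb ρc X Y (Z - Z') = triT ρa ρb ρc X Y Z - triT ρa ρb ρc X Y Z' := by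
  rw [triT_cyc, triT_sub2, ← triT_cyc ρa ρb ρc, ← triT_cyc ρa ρb ρc]

lemma ghz_fid (R : Matrix (Fin 2 × Fin 2 × Fin 2) (Fin 2 × Fin 2 × Fin 2) ℂ)
    (hR : R.PosSemidef) :
    (star ghzVec ⬝ᵥ R *ᵥ ghzVec).re =
      ((R (0, 0, 0) (0, 0, 0)).re + (R (1, 1, 1) (1, 1, 1)).re) / 2 +
        (R (0, 0, 0) (1, 1, 1)).re := by
  have h1 : R (1, 1, 1) (0, 0, 0) = star (R (0, 0, 0) (1, 1, 1)) := (hR.1.apply _ _).symm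
  have hs : (Real.sqrt 2)⁻¹ * (Real.sqrt 2)⁻¹ = 1 / 2 := by
    rw [← mul_inv, Real.mul_self_sqrt (by norm_num)]; norm_num
  have h2 : star ghzVec ⬝ᵥ R *ᵥ ghzVec = (((Real.sqrt 2)⁻¹ * (Real.sqrt 2)⁻¹ : ℝ) : ℂ) *
      (R (0, 0, 0) (0, 0, 0) + R (0, 0, 0) (1, 1, 1) +
        (R (1, 1, 1) (0, 0, 0) + R (1, 1, 1) (1, 1, 1))) := by
    simp only [dotProduct, mulVec, ghzVec, Fintype.sum_prod_type, Fin.sum_univ_two, Pi.star_apply]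
    simp
    ring
  rw [h2, hs, h1, Complex.re_ofReal_mul]
  simp
  ring

lemma psd_off (R : Matrix (Fin 2 × Fin 2 × Fin 2) (Fin 2 × Fin 2 × Fin 2) ℂ)
    (hR : R.PosSemidef) (i j : Fin 2 × Fin 2 × Fin 2) :
    (R i j).re ^ 2 ≤ (R i i).re * (R j j).re := by
  have h := (hR.submatrix ![i, j]).det_nonneg
  rw [Matrix.det_fin_two] at h
  have h1 : R j i = star (R i j) := (hR.1.apply _ _).symm
  have h2 := (Complex.le_def.1 (hR.diag_nonneg (i := i))).2
  have h3 := (Complex.le_def.1 h).1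
  simp [h1] at h3 h2
  rw [← h2] at h3
  nlinarith [sq_nonneg (R i j).im]

end lemmas


/-- Every three-qubit triangle network state with local
channels has fidelity at most `3 − √5` to the GHZ state. -/
theorem stmt14 {d LA LB LC : ℕ} (hd : 1 ≤ d)
    (ρa ρb ρc : Matrix (D2 d) (D2 d) ℂ)
    (hρa : IsDensity ρa) (hρb : IsDensity ρb) (hρc : IsDensity ρc)
    (KA : Fin LA → Matrix (Fin 2) (D2 d) ℂ)
    (KB : Fin LB → Matrix (Fin 2) (D2 d) ℂ)
    (KC : Fin LC → Matrix (Fin 2) (D2 d) ℂ)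
    (hKA : ∑ l, (KA l)ᴴ * KA l = 1)
    (hKB : ∑ l, (KB l)ᴴ * KB l = 1)
    (hKC : ∑ l, (KC l)ᴴ * KC l = 1) :
    (star ghzVec ⬝ᵥ (ctnState ρa ρb ρc KA KB KC) *ᵥ ghzVec).re ≤
      3 - Real.sqrt 5 := by
  have hpsd := ctn_psd hρa hρb hρc KA KB KC
  have hoff := psd_off _ hpsd (0, 0, 0) (1, 1, 1)
  rw [ghz_fid _ hpsd]
  have hnn : ∀ x y z : Fin 2, 0 ≤ (triT ρa ρb ρc (effE KA x) (effE KB y) (effE KC z)).re := by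
    intro x y z
    rw [← ctn_diag]
    exact (Complex.le_def.1 hpsd.diag_nonneg).1
  have hone : (triT ρa ρb ρc 1 1 1).re = 1 := by
    rw [triT_X hρa, nred2_one (ptr1_dens hρb).2, one_mul, (ptr2_dens hρc).2, Complex.one_re]
  have htot := net_total hρa hρb hρc hKA hKB hKC rfl rfl rfl
  have eA := effE_add hKA
  have eB := effE_add hKB
  have eC := effE_add hKC
  have n000 := hnn 0 0 0
  have n001 := hnn 0 0 1
  have n010 := hnn 0 1 0
  have n011 := hnn 0 1 1
  have n100 := hnn 1 0 0
  have n101 := hnn 1 0 1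
  have n110 := hnn 1 1 0
  have n111 := hnn 1 1 1
  simp only [ctn_diag] at hoff ⊢
  generalize effE KA 0 = a0 at *
  generalize effE KA 1 = a1 at *
  generalize effE KB 0 = b0 at *
  generalize effE KB 1 = b1 at *
  generalize effE KC 0 = c0 at *
  generalize effE KC 1 = c1 at *
  have hone' : triT ρa ρb ρc 1 1 1 = triT ρa ρb ρc (a0 + a1) (b0 + b1) (c0 + c1) := by
    rw [eA, eB, eC]
  have hAB : triT ρa ρb ρc (a0 - a1) (b0 - b1) 1 =
      triT ρa ρb ρc (a0 - a1) (b0 - b1) (c0 + c1) := by rw [eC]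
  have hBC : triT ρa ρb ρc 1 (b0 - b1) (c0 - c1) =
      triT ρa ρb ρc (a0 + a1) (b0 - b1) (c0 - c1) := by rw [eA]
  have hAC : triT ρa ρb ρc (a0 - a1) 1 (c0 - c1) =
      triT ρa ρb ρc (a0 - a1) (b0 + b1) (c0 - c1) := by rw [eB]
  have hA : triT ρa ρb ρc (a0 - a1) 1 1 =
      triT ρa ρb ρc (a0 - a1) (b0 + b1) (c0 + c1) := by rw [eB, eC]
  have hB : triT ρa ρb ρc 1 (b0 - b1) 1 =
      triT ρa ρb ρc (a0 + a1) (b0 - b1) (c0 + c1) := by rw [eA, eC]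
  have hC : triT ρa ρb ρc 1 1 (c0 - c1) =
      triT ρa ρb ρc (a0 + a1) (b0 + b1) (c0 - c1) := by rw [eA, eB]
  rw [hone'] at hone
  rw [hAB, hBC, hAC, hA, hB, hC] at htot
  simp only [triT_add, triT_sub, triT_add2, triT_sub2, triT_add3, triT_sub3,
    Complex.add_re, Complex.sub_re] at hone htot
  generalize (triT ρa ρb ρc a0 b0 c0).re = p000 at *
  generalize (triT ρa ρb ρc a0 b0 c1).re = p001 at *
  generalize (triT ρa ρb ρc a0 b1 c0).re = p010 at *
  generalize (triT ρa ρb ρc a0 b1 c1).re = p011 at *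
  generalize (triT ρa ρb ρc a1 b0 c0).re = p100 at *
  generalize (triT ρa ρb ρc a1 b0 c1).re = p101 at *
  generalize (triT ρa ρb ρc a1 b1 c0).re = p110 at *
  generalize (triT ρa ρb ρc a1 b1 c1).re = p111 at *
  refine final_arith n000 n111 n001 n010 n100 n011 n101 n110 (by linarith) hoff rfl ?_
  obtain ⟨zA, hzA⟩ : ∃ z, z = p000 + p001 + p010 + p011 - p100 - p101 - p110 - p111 := ⟨_, rfl⟩
  obtain ⟨zB, hzB⟩ : ∃ z, z = p000 + p001 - p010 - p011 + p100 + p101 - p110 - p111 := ⟨_, rfl⟩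
  obtain ⟨zC, hzC⟩ : ∃ z, z = p000 - p001 + p010 - p011 + p100 - p101 + p110 - p111 := ⟨_, rfl⟩
  have hE : 4 * (p000 + p111) - 1 ≤
      zA * zB + zB * zC + zC * zA + (3 - zA ^ 2 - zB ^ 2 - zC ^ 2) / 2 := by
    rw [hzA, hzB, hzC]
    refine le_trans (le_of_eq ?_) (htot.trans (le_of_eq ?_))
    · linarith
    · ring
  have hS : 3 * (p000 - p111) + (p001 + p010 + p100 - p011 - p101 - p110) = zA + zB + zC := by
    rw [hzA, hzB, hzC]; ring
  rw [hS]
  nlinarith [sq_nonneg (zA - zB), sq_nonneg (zB - zC), sq_nonneg (zC - zA)]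
end
end

section
/- Let ρ = ⊗_{s∈S} ρ_s be a basic no-common-double-source (BNCDS) network state on N nodes, and for each node x let {A_{x|i}} be a finite family of observables for node x. Let Γ be the covariance matrix of the combined family {A_{x|i} : x = 1,…,N} on ρ, with N×N block structure, off-diagonal blocks γ_{xy}. Then γ_{xy} = 0 whenever nodes x and y share no source, and there exist Hermitian matrices Υ_x^s (for s ∈ S and x ∈ N(s)) such that Γ = Σ_{s∈S} T_s, where T_s is the block matrix whose diagonal x-block is Υ_x^s if x ∈ N(s) and 0 otherwise, whose off-diagonal (x,y)-block is γ_{xy} if {x,y} ⊆ N(s) and 0 otherwise, and each T_s is positive semidefinite. -/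
open Matrix BigOperators
open scoped ComplexOrder

noncomputable section

section network

variable {N nS d : ℕ} (Ns : Fin nS → Finset (Fin N))

/-- Index of the global Hilbert space `⊗_{s} ⊗_{x ∈ N(s)} C^d` of the network. -/
abbrev GIdx (Ns : Fin nS → Finset (Fin N)) (d : ℕ) := ∀ s : Fin nS, (↥(Ns s) → Fin d)

/-- Index of node `x`'s subsystem: the factors `(s, x)` with `x ∈ N(s)`. -/
abbrev NIdx (Ns : Fin nS → Finset (Fin N)) (d : ℕ) (x : Fin N) :=
  ∀ _ : {s : Fin nS // x ∈ Ns s}, Fin d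

/-- The global network state `⊗_{s ∈ S} ρ_s`. -/
def networkState (ρs : ∀ s : Fin nS, Matrix (↥(Ns s) → Fin d) (↥(Ns s) → Fin d) ℂ) :
    Matrix (GIdx Ns d) (GIdx Ns d) ℂ :=
  Matrix.of fun i j => ∏ s, ρs s (i s) (j s)

/-- Embed an observable acting on node `x`'s subsystem into the global space
(tensored with the identity on all other factors). -/
def embedNode (x : Fin N) (M : Matrix (NIdx Ns d x) (NIdx Ns d x) ℂ) :
    Matrix (GIdx Ns d) (GIdx Ns d) ℂ :=
  Matrix.of fun i j =>
    if ∀ (s : Fin nS) (y : ↥(Ns s)), (y : Fin N) ≠ x → i s y = j s y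
    then M (fun s => i s.1 ⟨x, s.2⟩) (fun s => j s.1 ⟨x, s.2⟩) else 0

end network


section aux
set_option linter.unusedSectionVars false

variable {n : ℕ} {α : Fin n → Type} [∀ s, Fintype (α s)] [∀ s, DecidableEq (α s)]

/-- Product state. -/
def prodSt (ρ : ∀ s, Matrix (α s) (α s) ℂ) : Matrix (∀ s, α s) (∀ s, α s) ℂ :=
  Matrix.of fun i j => ∏ s, ρ s (i s) (j s)

/-- Conditional expectation over the source `s`. -/
def cE (ρ : ∀ s, Matrix (α s) (α s) ℂ) (s : Fin n) (X : Matrix (∀ s, α s) (∀ s, α s) ℂ) :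
    Matrix (∀ s, α s) (∀ s, α s) ℂ :=
  Matrix.of fun i j => if i s = j s then
    ∑ a, ∑ b, X (Function.update i s a) (Function.update j s b) * ρ s b a else 0

/-- Acting trivially on source `s`. -/
def Triv (s : Fin n) (X : Matrix (∀ s, α s) (∀ s, α s) ℂ) : Prop :=
  (∀ i j, i s ≠ j s → X i j = 0) ∧
  ∀ i j a, i s = j s → X (Function.update i s a) (Function.update j s a) = X i j

lemma cE_triv (ρ : ∀ s, Matrix (α s) (α s) ℂ) (s : Fin n)
    (X : Matrix (∀ s, α s) (∀ s, α s) ℂ) : Triv s (cE ρ s X) := by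
  constructor
  · intro i j h
    simp [cE, h]
  · intro i j a h
    simp [cE, h]

lemma cE_triv_of (ρ : ∀ s, Matrix (α s) (α s) ℂ) (s t : Fin n)
    (X : Matrix (∀ s, α s) (∀ s, α s) ℂ) (hX : Triv s X) : Triv s (cE ρ t X) := by
  by_cases hst : s = t
  · subst hst; exact cE_triv _ _ _
  constructor
  · intro i j h
    simp only [cE, Matrix.of_apply]
    split_ifs with h1
    · refine Finset.sum_eq_zero fun a _ => Finset.sum_eq_zero fun b _ => ?_
      rw [hX.1, zero_mul]
      simpa [Function.update_of_ne hst] using h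
    · rfl
  · intro i j a h
    simp only [cE, Matrix.of_apply, Function.update_of_ne (Ne.symm hst)]
    split_ifs with h1
    · refine Finset.sum_congr rfl fun c _ => Finset.sum_congr rfl fun b _ => ?_
      rw [Function.update_comm hst, Function.update_comm hst, hX.2]
      simpa [Function.update_of_ne hst] using h
    · rfl

lemma cE_of_triv (ρ : ∀ s, Matrix (α s) (α s) ℂ) (s : Fin n) (hρ : (ρ s).trace = 1)
    (X : Matrix (∀ s, α s) (∀ s, α s) ℂ) (hX : Triv s X) : cE ρ s X = X := by
  ext i j
  simp only [cE, Matrix.of_apply]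
  split_ifs with h
  · have : ∀ a, ∑ b, X (Function.update i s a) (Function.update j s b) * ρ s b a
        = X i j * ρ s a a := by
      intro a
      rw [Finset.sum_eq_single a]
      · rw [hX.2 _ _ _ h]
      · intro b _ hb
        rw [hX.1, zero_mul]
        simpa using hb.symm
      · simp
    simp only [this]
    rw [← Finset.mul_sum]
    have h2 : ∑ a, ρ s a a = 1 := hρ
    rw [h2, mul_one]
  · rw [hX.1 _ _ h]

lemma cE_herm (ρ : ∀ s, Matrix (α s) (α s) ℂ) (s : Fin n) (hρ : (ρ s).IsHermitian)
    (X : Matrix (∀ s, α s) (∀ s, α s) ℂ) (hX : X.IsHermitian) : (cE ρ s X).IsHermitian := by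
  ext i j
  simp only [cE, Matrix.of_apply, Matrix.conjTranspose_apply]
  by_cases h : i s = j s
  · rw [if_pos h, if_pos h.symm, star_sum]
    simp only [star_sum, star_mul']
    rw [Finset.sum_comm]
    refine Finset.sum_congr rfl fun a _ => Finset.sum_congr rfl fun b _ => ?_
    rw [hX.apply, hρ.apply]
  · rw [if_neg h, if_neg (Ne.symm h), star_zero]

lemma upd_split (s : Fin n) (a c : α s) (r : ∀ j : {j // j ≠ s}, α j) :
    Function.update ((Equiv.piSplitAt s α).symm (a, r)) s c
      = (Equiv.piSplitAt s α).symm (c, r) := by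
  ext t
  by_cases h : t = s
  · subst h; simp [Equiv.piSplitAt]
  · simp [Equiv.piSplitAt, h]

lemma split_self (s : Fin n) (a : α s) (r : ∀ j : {j // j ≠ s}, α j) :
    ((Equiv.piSplitAt s α).symm (a, r)) s = a := by
  simp [Equiv.piSplitAt]

lemma prodSt_split (ρ : ∀ s, Matrix (α s) (α s) ℂ) (s : Fin n) (a b : α s)
    (r q : ∀ j : {j // j ≠ s}, α j) :
    prodSt ρ ((Equiv.piSplitAt s α).symm (a, r)) ((Equiv.piSplitAt s α).symm (b, q))
      = ρ s a b * ∏ t : {j // j ≠ s}, ρ t (r t) (q t) := by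
  simp only [prodSt, Matrix.of_apply]
  rw [Fintype.prod_eq_mul_prod_subtype_ne _ s, split_self, split_self]
  congr 1
  refine Finset.prod_congr rfl fun t _ => ?_
  have := t.2
  simp [Equiv.piSplitAt, this]

lemma sum_split (s : Fin n) (f : (∀ s, α s) → ℂ) :
    ∑ i, f i = ∑ r, ∑ a, f ((Equiv.piSplitAt s α).symm (a, r)) := by
  rw [← (Equiv.piSplitAt s α).symm.sum_comp, Fintype.sum_prod_type, Finset.sum_comm]

lemma trace3 {m : Type*} [Fintype m] (X Y Z : Matrix m m ℂ) :
    (X * Y * Z).trace = ∑ i, ∑ j, ∑ k, X i j * Y j k * Z k i := by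
  simp only [Matrix.trace, Matrix.diag, Matrix.mul_apply, Finset.sum_mul]
  exact Finset.sum_congr rfl fun i _ => Finset.sum_comm

lemma cE_symm (ρ : ∀ s, Matrix (α s) (α s) ℂ) (s : Fin n)
    (X Y : Matrix (∀ s, α s) (∀ s, α s) ℂ) :
    (cE ρ s X * Y * prodSt ρ).trace = (X * cE ρ s Y * prodSt ρ).trace := by
  set e := (Equiv.piSplitAt s α).symm with he
  have key : ∀ Z : Matrix (∀ s, α s) (∀ s, α s) ℂ, ∀ a b r q, cE ρ s Z (e (a, r)) (e (b, q)) =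
      if a = b then ∑ c, ∑ c', Z (e (c, r)) (e (c', q)) * ρ s c' c else 0 := by
    intro Z a b r q
    simp only [cE, Matrix.of_apply, he, upd_split, split_self]
  have trs : ∀ U V : Matrix (∀ s, α s) (∀ s, α s) ℂ, (U * V * prodSt ρ).trace =
      ∑ r, ∑ q, ∑ w, (∑ a, ∑ b, ∑ c, U (e (a, r)) (e (b, q)) * V (e (b, q)) (e (c, w)) * ρ s c a) *
        ∏ t : {j // j ≠ s}, ρ t (w t) (r t) := by
    intro U V
    rw [trace3, sum_split s]
    refine Finset.sum_congr rfl fun r _ => ?_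
    have h1 : ∀ a, (∑ j, ∑ k, U (e (a, r)) j * V j k * prodSt ρ k (e (a, r))) =
        ∑ q, ∑ w, ∑ b, ∑ c, U (e (a, r)) (e (b, q)) * V (e (b, q)) (e (c, w)) *
          prodSt ρ (e (c, w)) (e (a, r)) := by
      intro a
      rw [sum_split s]
      refine Finset.sum_congr rfl fun q _ => ?_
      conv_rhs => rw [Finset.sum_comm]
      refine Finset.sum_congr rfl fun b _ => ?_
      rw [sum_split s]
    rw [Finset.sum_congr rfl fun a _ => h1 a, Finset.sum_comm]
    refine Finset.sum_congr rfl fun q _ => ?_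
    rw [Finset.sum_comm]
    refine Finset.sum_congr rfl fun w _ => ?_
    simp only [Finset.sum_mul]
    refine Finset.sum_congr rfl fun a _ => Finset.sum_congr rfl fun b _ =>
      Finset.sum_congr rfl fun c _ => ?_
    rw [he, prodSt_split, mul_assoc, mul_assoc, mul_assoc]
  rw [trs, trs]
  refine Finset.sum_congr rfl fun r _ => Finset.sum_congr rfl fun q _ =>
    Finset.sum_congr rfl fun w _ => ?_
  congr 1
  simp only [key]
  trans (∑ a, ∑ b, X (e (a, r)) (e (b, q)) * ρ s b a) *
    (∑ a, ∑ b, Y (e (a, q)) (e (b, w)) * ρ s b a)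
  · simp only [ite_mul, zero_mul, Finset.sum_ite_irrel, Finset.sum_const_zero]
    simp only [Finset.sum_ite_eq, Finset.mem_univ, if_true]
    simp only [mul_assoc, ← Finset.mul_sum]
  · simp only [mul_ite, ite_mul, mul_zero, zero_mul, Finset.sum_ite_eq, Finset.mem_univ, if_true]
    simp only [Finset.sum_mul]
    refine Finset.sum_congr rfl fun a _ => Finset.sum_congr rfl fun b _ => ?_
    ring

open scoped MatrixOrder Matrix.Norms.L2Operator in
lemma prodSt_psd (ρ : ∀ s, Matrix (α s) (α s) ℂ) (h : ∀ s, (ρ s).PosSemidef) :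
    (prodSt ρ).PosSemidef := by
  have : ∀ s, ∃ C : Matrix (α s) (α s) ℂ, ρ s = Cᴴ * C := fun s =>
    CStarAlgebra.nonneg_iff_eq_star_mul_self.1 (Matrix.nonneg_iff_posSemidef.2 (h s))
  choose C hC using this
  have : prodSt ρ = (prodSt C)ᴴ * prodSt C := by
    ext i j
    simp only [prodSt, Matrix.of_apply, hC, Matrix.mul_apply, Matrix.conjTranspose_apply]
    rw [Finset.prod_univ_sum]
    simp [Finset.prod_mul_distrib]
  rw [this]
  exact Matrix.posSemidef_conjTranspose_mul_self _

lemma prodSt_trace (ρ : ∀ s, Matrix (α s) (α s) ℂ) (h : ∀ s, (ρ s).trace = 1) :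
    (prodSt ρ).trace = 1 := by
  have h' : ∀ s, ∑ a, ρ s a a = 1 := h
  simp only [Matrix.trace, Matrix.diag, prodSt, Matrix.of_apply]
  have := Finset.prod_univ_sum (fun s => (Finset.univ : Finset (α s))) (fun s a => ρ s a a)
  simp only [h', Finset.prod_const_one, Fintype.piFinset_univ] at this
  exact this.symm

/-- Iterated conditional expectation. -/
def itE (ρ : ∀ s, Matrix (α s) (α s) ℂ) (X : Matrix (∀ s, α s) (∀ s, α s) ℂ) :
    ℕ → Matrix (∀ s, α s) (∀ s, α s) ℂ
  | 0 => X
  | m + 1 => if h : m < n then cE ρ ⟨m, h⟩ (itE ρ X m) else itE ρ X m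

lemma itE_triv_of (ρ : ∀ s, Matrix (α s) (α s) ℂ) (X : Matrix (∀ s, α s) (∀ s, α s) ℂ)
    (s : Fin n) (hX : Triv s X) (m : ℕ) : Triv s (itE ρ X m) := by
  induction m with
  | zero => exact hX
  | succ m ih =>
    rw [itE]; split_ifs
    · exact cE_triv_of _ _ _ _ ih
    · exact ih

lemma itE_triv (ρ : ∀ s, Matrix (α s) (α s) ℂ) (X : Matrix (∀ s, α s) (∀ s, α s) ℂ)
    (s : Fin n) (m : ℕ) (hm : s.1 < m) : Triv s (itE ρ X m) := by
  induction m with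
  | zero => omega
  | succ m ih =>
    rw [itE]
    rcases Nat.lt_succ_iff_lt_or_eq.1 hm with h1 | h1
    · split_ifs
      · exact cE_triv_of _ _ _ _ (ih h1)
      · exact ih h1
    · subst h1
      rw [dif_pos s.2]
      exact cE_triv _ _ _

lemma itE_herm (ρ : ∀ s, Matrix (α s) (α s) ℂ) (hρ : ∀ s, (ρ s).IsHermitian)
    (X : Matrix (∀ s, α s) (∀ s, α s) ℂ)
    (hX : X.IsHermitian) (m : ℕ) : (itE ρ X m).IsHermitian := by
  induction m with
  | zero => exact hX
  | succ m ih =>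
    rw [itE]; split_ifs
    · exact cE_herm _ _ (hρ _) _ ih
    · exact ih

lemma one_triv (s : Fin n) : Triv s (1 : Matrix (∀ s, α s) (∀ s, α s) ℂ) := by
  constructor
  · intro i j h
    exact Matrix.one_apply_ne (fun e => h (by rw [e]))
  · intro i j a h
    by_cases hij : i = j
    · subst hij; simp
    · rw [Matrix.one_apply_ne hij, Matrix.one_apply_ne]
      intro e
      apply hij
      ext t
      by_cases ht : t = s
      · subst ht; exact h
      · have := congrFun e t
        simpa [ht] using this

lemma itE_trace (ρ : ∀ s, Matrix (α s) (α s) ℂ) (hρ : ∀ s, (ρ s).trace = 1)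
    (X : Matrix (∀ s, α s) (∀ s, α s) ℂ) (m : ℕ) :
    (itE ρ X m * prodSt ρ).trace = (X * prodSt ρ).trace := by
  induction m with
  | zero => rfl
  | succ m ih =>
    rw [itE]; split_ifs with h
    · have := cE_symm ρ ⟨m, h⟩ (itE ρ X m) 1
      rw [cE_of_triv ρ _ (hρ _) 1 (one_triv _), mul_one, mul_one] at this
      rw [this, ih]
    · exact ih

lemma diag_const (X : Matrix (∀ s, α s) (∀ s, α s) ℂ) (hX : ∀ s, Triv s X)
    (i j : ∀ s, α s) : X i i = X j j := by
  have : ∀ F : Finset (Fin n), X (fun t => if t ∈ F then j t else i t)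
      (fun t => if t ∈ F then j t else i t) = X i i := by
    intro F
    induction F using Finset.induction_on with
    | empty => simp
    | insert s F hs ih =>
      rw [← ih]
      have : (fun t => if t ∈ insert s F then j t else i t) =
          Function.update (fun t => if t ∈ F then j t else i t) s (j s) := by
        ext t
        by_cases ht : t = s
        · subst ht; simp
        · simp [ht]
      rw [this, (hX s).2 _ _ (j s) rfl]
  simpa using (this Finset.univ).symm

lemma scalar_of_triv (ρ : ∀ s, Matrix (α s) (α s) ℂ) (hρ : ∀ s, (ρ s).trace = 1)
    (X : Matrix (∀ s, α s) (∀ s, α s) ℂ) (hX : ∀ s, Triv s X) :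
    X = (X * prodSt ρ).trace • (1 : Matrix (∀ s, α s) (∀ s, α s) ℂ) := by
  have hc : ∃ c : ℂ, X = c • (1 : Matrix (∀ s, α s) (∀ s, α s) ℂ) := by
    by_cases he : Nonempty (∀ s, α s)
    · obtain ⟨i0⟩ := he
      refine ⟨X i0 i0, ?_⟩
      ext i j
      by_cases hij : i = j
      · subst hij; simp [diag_const X hX i i0]
      · obtain ⟨s, hs⟩ := Function.ne_iff.1 hij
        simp [hij, (hX s).1 i j hs]
    · refine ⟨0, ?_⟩
      ext i
      exact (he ⟨i⟩).elim
  obtain ⟨c, rfl⟩ := hc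
  simp [prodSt_trace ρ hρ]

/-- Martingale difference. -/
def mD (ρ : ∀ s, Matrix (α s) (α s) ℂ) (X : Matrix (∀ s, α s) (∀ s, α s) ℂ) (s : Fin n) :
    Matrix (∀ s, α s) (∀ s, α s) ℂ := itE ρ X s - cE ρ s (itE ρ X s)

lemma mD_step (ρ : ∀ s, Matrix (α s) (α s) ℂ) (hρ : ∀ s, (ρ s).trace = 1)
    (X Y : Matrix (∀ s, α s) (∀ s, α s) ℂ) (s : Fin n) :
    (mD ρ X s * mD ρ Y s * prodSt ρ).trace =
      (itE ρ X s * itE ρ Y s * prodSt ρ).trace -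
      (itE ρ X (s + 1) * itE ρ Y (s + 1) * prodSt ρ).trace := by
  have e : ∀ Z, itE ρ Z (s + 1) = cE ρ s (itE ρ Z s) := by
    intro Z; rw [itE, dif_pos s.2]
  rw [e, e]
  unfold mD
  generalize itE ρ X s = U
  generalize itE ρ Y s = V
  have h1 := cE_symm ρ s (cE ρ s U) V
  have h2 := cE_symm ρ s U (cE ρ s V)
  rw [cE_of_triv ρ s (hρ s) _ (cE_triv _ _ _)] at h1 h2
  simp only [sub_mul, mul_sub, Matrix.trace_sub]
  rw [h1, ← h2]
  ring

lemma mD_zero (ρ : ∀ s, Matrix (α s) (α s) ℂ) (hρ : ∀ s, (ρ s).trace = 1)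
    (X : Matrix (∀ s, α s) (∀ s, α s) ℂ) (s : Fin n) (hX : Triv s X) : mD ρ X s = 0 := by
  rw [mD, cE_of_triv ρ s (hρ s) _ (itE_triv_of ρ X s hX _), sub_self]

lemma mD_sum (ρ : ∀ s, Matrix (α s) (α s) ℂ) (hρ : ∀ s, (ρ s).trace = 1)
    (X Y : Matrix (∀ s, α s) (∀ s, α s) ℂ) :
    ∑ s, (mD ρ X s * mD ρ Y s * prodSt ρ).trace =
      (X * Y * prodSt ρ).trace - (X * prodSt ρ).trace * (Y * prodSt ρ).trace := by
  simp only [mD_step ρ hρ]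
  rw [Fin.sum_univ_eq_sum_range (fun m => (itE ρ X m * itE ρ Y m * prodSt ρ).trace -
      (itE ρ X (m + 1) * itE ρ Y (m + 1) * prodSt ρ).trace) n, Finset.sum_range_sub']
  congr 1
  rw [scalar_of_triv ρ hρ (itE ρ X n) (fun s => itE_triv ρ X s n s.2),
    scalar_of_triv ρ hρ (itE ρ Y n) (fun s => itE_triv ρ Y s n s.2), itE_trace ρ hρ,
    itE_trace ρ hρ]
  simp [prodSt_trace ρ hρ]
  ring

lemma gram_psd {m ι : Type*} [Fintype m] [Fintype ι] (R : Matrix m m ℂ) (hR : R.PosSemidef)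
    (W : ι → Matrix m m ℂ) (hW : ∀ i, (W i).IsHermitian) :
    (Matrix.of fun p q => (W p * W q * R).trace : Matrix ι ι ℂ).PosSemidef := by
  classical
  refine Matrix.PosSemidef.of_dotProduct_mulVec_nonneg ?_ ?_
  · ext p q
    simp only [Matrix.conjTranspose_apply, Matrix.of_apply]
    rw [← Matrix.trace_conjTranspose, Matrix.conjTranspose_mul, Matrix.conjTranspose_mul,
      (hW _).eq, (hW _).eq, hR.1.eq, Matrix.trace_mul_comm]
  · intro v
    have : star v ⬝ᵥ ((Matrix.of fun p q => (W p * W q * R).trace : Matrix ι ι ℂ) *ᵥ v) =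
        ((∑ p, v p • W p) * R * (∑ p, v p • W p)ᴴ).trace := by
      rw [Matrix.trace_mul_comm, ← mul_assoc, Matrix.conjTranspose_sum]
      simp only [Matrix.conjTranspose_smul, (hW _).eq, Finset.sum_mul, Finset.mul_sum,
        Matrix.trace_sum, dotProduct, Matrix.mulVec, Matrix.of_apply, Pi.star_apply]
      simp only [Matrix.smul_mul, Matrix.mul_smul, Matrix.trace_smul, smul_eq_mul]
      try rw [Finset.sum_comm]
      refine Finset.sum_congr rfl fun a _ => Finset.sum_congr rfl fun b _ => ?_
      ring
    rw [this]
    exact (hR.mul_mul_conjTranspose_same _).trace_nonneg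

end aux

lemma embed_triv {N nS d : ℕ} (Ns : Fin nS → Finset (Fin N)) (x : Fin N)
    (M : Matrix (NIdx Ns d x) (NIdx Ns d x) ℂ) (s : Fin nS) (hx : x ∉ Ns s) :
    Triv (α := fun s => (↥(Ns s) → Fin d)) s (embedNode Ns x M) := by
  have hne : ∀ y : ↥(Ns s), (y : Fin N) ≠ x := fun y e => hx (e ▸ y.2)
  constructor
  · intro i j h
    simp only [embedNode, Matrix.of_apply]
    rw [if_neg]
    intro H
    exact h (funext fun y => H s y (hne y))
  · intro i j a h
    have hs : ∀ t : {s : Fin nS // x ∈ Ns s}, t.1 ≠ s := fun t e => hx (e ▸ t.2)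
    simp only [embedNode, Matrix.of_apply, Function.update_of_ne (hs _)]
    congr 1
    refine propext (forall_congr' fun t => ?_)
    by_cases ht : t = s
    · subst ht; simp [h]
    · simp [Function.update_of_ne ht]

lemma embed_herm {N nS d : ℕ} (Ns : Fin nS → Finset (Fin N)) (x : Fin N)
    (M : Matrix (NIdx Ns d x) (NIdx Ns d x) ℂ) (hM : M.IsHermitian) :
    (embedNode Ns x M).IsHermitian := by
  ext i j
  simp only [embedNode, Matrix.of_apply, Matrix.conjTranspose_apply]
  simp only [eq_comm (a := j _ _)]
  split_ifs
  · exact hM.apply _ _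
  · simp

/-- Block decomposition for covariance matrices of basic
no-common-double-source network states: off-diagonal blocks between
unconnected nodes vanish, and `Γ = Σ_s T_s` where each `T_s` is positive
semidefinite, carries the off-diagonal blocks `γ_{xy}` for `{x,y} ⊆ N(s)`,
has (Hermitian) diagonal blocks `Υ_x^s` for `x ∈ N(s)`, and vanishes
elsewhere. -/
theorem stmt17 {N nS d : ℕ} (hN : 1 ≤ N) (hd : 1 ≤ d)
    (Ns : Fin nS → Finset (Fin N))
    (ρs : ∀ s : Fin nS, Matrix (↥(Ns s) → Fin d) (↥(Ns s) → Fin d) ℂ)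
    (hρs : ∀ s, IsDensity (ρs s))
    -- every node belongs to at least one source
    (hcover : ∀ x : Fin N, ∃ s, x ∈ Ns s)
    -- no-common-double-source condition
    (hncds : ∀ s t : Fin nS, s ≠ t → ∀ x y : Fin N, x ≠ y →
      ¬(x ∈ Ns s ∧ y ∈ Ns s ∧ x ∈ Ns t ∧ y ∈ Ns t))
    (k : Fin N → ℕ)
    (A : ∀ x : Fin N, Fin (k x) → Matrix (NIdx Ns d x) (NIdx Ns d x) ℂ)
    (hA : ∀ x i, (A x i).IsHermitian)
    (Γ : Matrix (Σ x : Fin N, Fin (k x)) (Σ x : Fin N, Fin (k x)) ℂ)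
    (hΓ : Γ = covMat (fun p : Σ x : Fin N, Fin (k x) => embedNode Ns p.1 (A p.1 p.2))
      (networkState Ns ρs)) :
    -- off-diagonal blocks between nodes sharing no source vanish
    (∀ x y : Fin N, x ≠ y → (∀ s, ¬(x ∈ Ns s ∧ y ∈ Ns s)) →
      ∀ (i : Fin (k x)) (j : Fin (k y)), Γ ⟨x, i⟩ ⟨y, j⟩ = 0) ∧
    -- block decomposition
    ∃ Υ : ∀ (_ : Fin nS) (x : Fin N), Matrix (Fin (k x)) (Fin (k x)) ℂ,
      (∀ s x, x ∈ Ns s → (Υ s x).IsHermitian) ∧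
      ∃ T : Fin nS → Matrix (Σ x : Fin N, Fin (k x)) (Σ x : Fin N, Fin (k x)) ℂ,
        (∀ s, T s = Matrix.of fun p q =>
          if h : p.1 = q.1 then
            (if p.1 ∈ Ns s then Υ s p.1 p.2 (Fin.cast (congrArg k h.symm) q.2) else 0)
          else
            (if p.1 ∈ Ns s ∧ q.1 ∈ Ns s then Γ p q else 0)) ∧
        Γ = ∑ s, T s ∧
        ∀ s, (T s).PosSemidef := by
  have htr : ∀ s, (ρs s).trace = 1 := fun s => (hρs s).2
  let W : Fin nS → (Σ x : Fin N, Fin (k x)) → Matrix (GIdx Ns d) (GIdx Ns d) ℂ := fun s p =>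
    mD (α := fun s => (↥(Ns s) → Fin d)) ρs (embedNode Ns p.1 (A p.1 p.2)) s
  have hW0 : ∀ s p, p.1 ∉ Ns s → W s p = 0 := fun s p hp =>
    mD_zero (α := fun s => (↥(Ns s) → Fin d)) ρs htr _ s (embed_triv Ns p.1 _ s hp)
  have hWh : ∀ s p, (W s p).IsHermitian := by
    intro s p
    have h1 := itE_herm (α := fun s => (↥(Ns s) → Fin d)) ρs (fun s => (hρs s).1.1) _
      (embed_herm Ns p.1 _ (hA p.1 p.2)) s
    exact h1.sub (cE_herm _ _ (hρs s).1.1 _ h1)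
  let T : Fin nS → Matrix (Σ x : Fin N, Fin (k x)) (Σ x : Fin N, Fin (k x)) ℂ := fun s =>
    Matrix.of fun p q => (W s p * W s q * networkState Ns ρs).trace
  have hT : ∀ s, (T s).PosSemidef := fun s =>
    gram_psd _ (prodSt_psd (α := fun s => (↥(Ns s) → Fin d)) ρs (fun s => (hρs s).1)) _ (hWh s)
  have hsum : ∀ p q, Γ p q = ∑ s, T s p q := by
    intro p q
    rw [hΓ]
    exact (mD_sum (α := fun s => (↥(Ns s) → Fin d)) ρs htr _ _).symm
  have hT0 : ∀ s p q, ¬ (p.1 ∈ Ns s ∧ q.1 ∈ Ns s) → T s p q = 0 := by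
    intro s p q h
    simp only [T, Matrix.of_apply]
    by_cases hp : p.1 ∈ Ns s
    · rw [hW0 s q (fun hq => h ⟨hp, hq⟩)]; simp
    · rw [hW0 s p hp]; simp
  refine ⟨?_, fun s x => Matrix.of fun i j => T s ⟨x, i⟩ ⟨x, j⟩, ?_, T, ?_, ?_, hT⟩
  · intro x y _ h i j
    rw [hsum]
    exact Finset.sum_eq_zero fun s _ => hT0 s _ _ (h s)
  · intro s x _
    ext i j
    exact (hT s).1.apply _ _
  · intro s
    ext p q
    obtain ⟨x, i⟩ := p
    obtain ⟨y, j⟩ := q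
    simp only [Matrix.of_apply]
    split_ifs with h1 h2 h3
    · subst h1; rfl
    · exact hT0 s _ _ (fun h => h2 h.1)
    · rw [hsum, Finset.sum_eq_single s]
      · intro t _ hts
        exact hT0 t _ _ (fun h => hncds s t hts.symm x y h1 ⟨h3.1, h3.2, h.1, h.2⟩)
      · simp
    · exact hT0 s _ _ h3
  · ext p q
    rw [hsum, Matrix.sum_apply]
end
end
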